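/- arXiv:2004.08873 — 3 statements merged into one kernel-verified Lean document; each statement's English description precedes it below -/
import Mathlib

section
/- Let (R, m) be a Noetherian local ring of dimension d, let f_1,...,f_r be a part of a system of parameters of R generating an ideal I, and let x_1,...,x_{d-r} be elements of R whose images form a system of parameters of R/I such that the length of R/(I + (x_1,...,x_{d-r})) is at most N-1 for some positive integer N. Then for every ε_1,...,ε_r ∈ m^N, the sequence f_1+ε_1,...,f_r+ε_r is again a part of a system of parameters of R. -/
open IsLocalRing Filter

/-- The length of an `R`-module `M`, defined as the Krull dimension of its lattice of
submodules (the supremum of lengths of strictly increasing chains of submodules). -/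
noncomputable def modLen (R : Type) [CommRing R] (M : Type) [AddCommGroup M] [Module R M] :
    WithBot ℕ∞ := Order.krullDim (Submodule R M)

/-- The length of the `i`-th local cohomology module of `M` with support in `J`. -/
noncomputable def lcLen (R : Type) [CommRing R] (J : Ideal R) (i : ℕ) (M : Type)
    [AddCommGroup M] [Module R M] : WithBot ℕ∞ :=
  modLen R ((localCohomology J i).obj (ModuleCat.of R M))

/-- In a local ring, if a finite module has length at most `n`, it is killed by the `n`-th power
of the maximal ideal. -/
lemma maximalIdeal_pow_smul_top_eq_bot {R : Type} [CommRing R] [IsLocalRing R]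
    {M : Type} [AddCommGroup M] [Module R M] [IsNoetherian R M] {n : ℕ}
    (h : modLen R M ≤ ((n : ℕ∞) : WithBot ℕ∞)) :
    maximalIdeal R ^ n • (⊤ : Submodule R M) = ⊥ := by
  by_contra hne
  have hlt : ∀ k ≤ n, maximalIdeal R ^ (k + 1) • (⊤ : Submodule R M) <
      maximalIdeal R ^ k • (⊤ : Submodule R M) := by
    intro k hk
    refine lt_of_le_of_ne (Submodule.smul_mono_left (Ideal.pow_le_pow_right k.le_succ)) ?_
    intro heq
    have hbot : maximalIdeal R ^ k • (⊤ : Submodule R M) = ⊥ := by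
      refine Submodule.eq_bot_of_le_smul_of_le_jacobson_bot (maximalIdeal R) _
        (IsNoetherian.noetherian _) ?_ (maximalIdeal_le_jacobson _)
      rw [← Submodule.mul_smul, ← pow_succ', heq]
    exact hne (le_bot_iff.mp (hbot ▸ Submodule.smul_mono_left (Ideal.pow_le_pow_right hk)))
  let s : LTSeries (Submodule R M) :=
    { length := n + 1
      toFun := fun i => maximalIdeal R ^ (n + 1 - (i : ℕ)) • (⊤ : Submodule R M)
      step := fun i => by
        have := hlt (n - i) (Nat.sub_le _ _)
        have h1 : n - (i : ℕ) + 1 = n + 1 - i := by omega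
        have h2 : n - (i : ℕ) = n + 1 - (i + 1) := by omega
        rw [h1, h2] at this
        simpa using this }
  have hs : ((n + 1 : ℕ) : WithBot ℕ∞) ≤ ((n : ℕ∞) : WithBot ℕ∞) :=
    (Order.LTSeries.length_le_krullDim s).trans h
  have : n + 1 ≤ n := by exact_mod_cast hs
  omega

/-- In a local ring, if `R ⧸ J` has length at most `n`, then `J` contains the `n`-th power of the
maximal ideal. -/
lemma maximalIdeal_pow_le_of_modLen_quotient_le {R : Type} [CommRing R] [IsNoetherianRing R]
    [IsLocalRing R] {J : Ideal R} {n : ℕ} (h : modLen R (R ⧸ J) ≤ ((n : ℕ∞) : WithBot ℕ∞)) :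
    maximalIdeal R ^ n ≤ J := by
  intro a ha
  have hmem : a • (1 : R ⧸ J) ∈ maximalIdeal R ^ n • (⊤ : Submodule R (R ⧸ J)) :=
    Submodule.smul_mem_smul ha trivial
  rw [maximalIdeal_pow_smul_top_eq_bot h, Submodule.mem_bot, Algebra.smul_def, mul_one] at hmem
  exact Ideal.Quotient.eq_zero_iff_mem.mp hmem

/-- Dividing a Noetherian local ring by `n` elements of the maximal ideal drops the dimension
by at most `n`. -/
lemma ringKrullDim_le_ringKrullDim_quotient_span_range_add {A : Type*} [CommRing A]
    [IsNoetherianRing A] [IsLocalRing A] {n : ℕ} (g : Fin n → A)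
    (hg : ∀ i, g i ∈ maximalIdeal A) :
    ringKrullDim A ≤ ringKrullDim (A ⧸ Ideal.span (Set.range g)) + n := by
  classical
  have h := ringKrullDim_le_ringKrullDim_quotient_add_card (Finset.univ.image g) (by
    intro a ha
    obtain ⟨i, rfl⟩ : ∃ i, g i = a := by simpa using ha
    rw [IsLocalRing.ringJacobson_eq_maximalIdeal]
    exact hg i)
  rw [Finset.coe_image, Finset.coe_univ, Set.image_univ] at h
  refine h.trans (add_le_add le_rfl ?_)
  have : (Finset.univ.image g).card ≤ n := Finset.card_image_le.trans (by simp)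
  exact_mod_cast this

/-- Perturbing generators by elements of `m • J` does not change the ideal `J` they generate
together with `L`. -/
lemma span_range_add_sup_eq {R ι : Type*} [CommRing R] [IsNoetherianRing R] [IsLocalRing R]
    (f ε : ι → R) (L : Ideal R)
    (hε : ∀ i, ε i ∈ maximalIdeal R * (Ideal.span (Set.range f) ⊔ L)) :
    Ideal.span (Set.range fun i => f i + ε i) ⊔ L = Ideal.span (Set.range f) ⊔ L := by
  apply le_antisymm
  · refine sup_le (Ideal.span_le.mpr ?_) le_sup_right
    rintro _ ⟨i, rfl⟩
    have h : ε i ∈ Ideal.span (Set.range f) ⊔ L := Ideal.mul_le_right (hε i)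
    exact Ideal.add_mem _ (Ideal.mem_sup_left (Ideal.subset_span ⟨i, rfl⟩)) h
  · refine Submodule.le_of_le_smul_of_le_jacobson_bot (I := maximalIdeal R)
      (IsNoetherian.noetherian _) (maximalIdeal_le_jacobson _) ?_
    refine sup_le (Ideal.span_le.mpr ?_) (le_sup_right.trans le_sup_left)
    rintro _ ⟨i, rfl⟩
    rw [← add_sub_cancel_right (f i) (ε i)]
    exact sub_mem (Ideal.mem_sup_left (Ideal.mem_sup_left (Ideal.subset_span ⟨i, rfl⟩)))
      (Ideal.mem_sup_right (hε i))

theorem statement0 (R : Type) [CommRing R] [IsNoetherianRing R] [IsLocalRing R]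
    (d r N : ℕ) (hrd : r ≤ d) (hN : 0 < N) (hdim : ringKrullDim R = d)
    (f : Fin r → R) (I : Ideal R) (hI : I = Ideal.span (Set.range f))
    (hsop : ringKrullDim (R ⧸ I) = ((d - r : ℕ) : WithBot ℕ∞))
    (x : Fin (d - r) → R)
    (hxsop : ringKrullDim (R ⧸ (I ⊔ Ideal.span (Set.range x))) = (0 : ℕ))
    (hlen : modLen R (R ⧸ (I ⊔ Ideal.span (Set.range x))) ≤ (((N - 1 : ℕ) : ℕ∞) : WithBot ℕ∞))
    (ε : Fin r → R) (hε : ∀ i, ε i ∈ maximalIdeal R ^ N) :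
    ringKrullDim (R ⧸ Ideal.span (Set.range fun i => f i + ε i)) =
      ((d - r : ℕ) : WithBot ℕ∞) := by
  subst hI
  set K := Ideal.span (Set.range fun i => f i + ε i) with hK
  have hpow : maximalIdeal R ^ N ≤
      maximalIdeal R * (Ideal.span (Set.range f) ⊔ Ideal.span (Set.range x)) := by
    obtain ⟨n, rfl⟩ := Nat.exists_eq_succ_of_ne_zero hN.ne'
    rw [pow_succ']
    exact Ideal.mul_mono_right (maximalIdeal_pow_le_of_modLen_quotient_le hlen)
  have hsup : K ⊔ Ideal.span (Set.range x) = Ideal.span (Set.range f) ⊔ Ideal.span (Set.range x) :=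
    span_range_add_sup_eq f ε _ fun i => hpow (hε i)
  rw [← hsup] at hxsop
  have hproper : K ⊔ Ideal.span (Set.range x) ≠ ⊤ := by
    intro htop
    have := Ideal.Quotient.subsingleton_iff.mpr htop
    rw [ringKrullDim_eq_bot_of_subsingleton] at hxsop
    exact absurd hxsop (WithBot.bot_ne_coe (a := ((0 : ℕ) : ℕ∞)))
  have hmax := le_maximalIdeal hproper
  have hKm : K ≤ maximalIdeal R := le_sup_left.trans hmax
  have : Nontrivial (R ⧸ K) :=
    Ideal.Quotient.nontrivial_iff.mpr (hKm.trans_lt (maximalIdeal.isMaximal R).ne_top.lt_top).ne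
  have : IsLocalRing (R ⧸ K) :=
    .of_surjective' (Ideal.Quotient.mk K) Ideal.Quotient.mk_surjective
  apply le_antisymm
  · have h := ringKrullDim_le_ringKrullDim_quotient_span_range_add
      (fun i => Ideal.Quotient.mk K (x i)) fun i => by
        rw [mem_maximalIdeal, mem_nonunits_iff]
        intro hu
        refine hproper ?_
        obtain ⟨b, hb⟩ := hu.exists_right_inv
        obtain ⟨b, rfl⟩ := Ideal.Quotient.mk_surjective b
        rw [← map_mul, ← map_one (Ideal.Quotient.mk K), Ideal.Quotient.eq] at hb
        rw [Ideal.eq_top_iff_one, ← sub_sub_cancel (x i * b) 1]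
        exact sub_mem (Ideal.mem_sup_right (Ideal.mul_mem_right _ _
          (Ideal.subset_span ⟨i, rfl⟩))) (Ideal.mem_sup_left hb)
    have hmap : Ideal.span (Set.range fun i => Ideal.Quotient.mk K (x i)) =
        (Ideal.span (Set.range x)).map (Ideal.Quotient.mk K) := by
      rw [Ideal.map_span, ← Set.range_comp]
      rfl
    rw [hmap, ringKrullDim_eq_of_ringEquiv (DoubleQuot.quotQuotEquivQuotSup _ _), hxsop] at h
    simpa using h
  · have h := ringKrullDim_le_ringKrullDim_quotient_span_range_add (fun i => f i + ε i)
      fun i => hKm (Ideal.subset_span ⟨i, rfl⟩)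
    rw [← hK, hdim, ← Nat.sub_add_cancel hrd, Nat.cast_add] at h
    exact ENat.WithBot.add_le_add_natCast_right_iff.mp h
end

section
/- Let (R, m) be a Noetherian local ring of dimension d with H^i_m(R) of finite length for all i < d (i.e., R generalized Cohen-Macaulay), and let f be a parameter element of R (dim R/(f) = d-1). For any ε ∈ m such that ε annihilates H^i_m(R) for all i < d and f + ε is also a parameter element, the lengths of H^i_m(R/(f)) and H^i_m(R/(f+ε)) agree for all i < d - 1. -/
open IsLocalRing Filter

section
open CategoryTheory Limits

section
universe v u v' u'

lemma CategoryTheory.ShortComplex.Exact.conj {D : Type u'} [Category.{v'} D] [Abelian D]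
    {S : ShortComplex D} (hS : S.Exact) {Y₁ Y₂ Y₃ : D} (a : Y₁ ≅ S.X₁) (b : Y₂ ≅ S.X₂)
    (c : Y₃ ≅ S.X₃) {f : Y₁ ⟶ Y₂} {g : Y₂ ⟶ Y₃} (hf : f = a.hom ≫ S.f ≫ b.inv)
    (hg : g = b.hom ≫ S.g ≫ c.inv) : ∃ w, (ShortComplex.mk f g w).Exact := by
  subst hf hg
  refine ⟨by simp, ShortComplex.exact_of_iso (ShortComplex.isoMk a.symm b.symm c.symm ?_ ?_) hS⟩ <;>
  simp

lemma CategoryTheory.comp_two_naturality {D : Type u'} [Category.{v'} D]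
    {X₁ X₂ X₃ Y₁ Y₂ Y₃ : D} {f₁ : X₁ ⟶ Y₁} {f₂ : X₂ ⟶ Y₂} {f₃ : X₃ ⟶ Y₃}
    {p : X₁ ⟶ X₂} {q : X₂ ⟶ X₃} {p' : Y₁ ⟶ Y₂} {q' : Y₂ ⟶ Y₃}
    (h₁ : f₁ ≫ p' = p ≫ f₂) (h₂ : f₂ ≫ q' = q ≫ f₃) :
    f₁ ≫ p' ≫ q' = (p ≫ q) ≫ f₃ := by
  rw [reassoc_of% h₁, h₂, Category.assoc]

lemma CategoryTheory.comp_three_naturality {D : Type u'} [Category.{v'} D]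
    {X₁ X₂ X₃ X₄ Y₁ Y₂ Y₃ Y₄ : D} {f₁ : X₁ ⟶ Y₁} {f₂ : X₂ ⟶ Y₂} {f₃ : X₃ ⟶ Y₃} {f₄ : X₄ ⟶ Y₄}
    {p : X₁ ⟶ X₂} {q : X₂ ⟶ X₃} {r : X₃ ⟶ X₄} {p' : Y₁ ⟶ Y₂} {q' : Y₂ ⟶ Y₃} {r' : Y₃ ⟶ Y₄}
    (h₁ : f₁ ≫ p' = p ≫ f₂) (h₂ : f₂ ≫ q' = q ≫ f₃) (h₃ : f₃ ≫ r' = r ≫ f₄) :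
    f₁ ≫ p' ≫ q' ≫ r' = (p ≫ q ≫ r) ≫ f₄ := by
  rw [reassoc_of% h₁, reassoc_of% h₂, h₃, Category.assoc, Category.assoc]

variable {C : Type u} [Category.{v} C] {D : Type u'} [Category.{v'} D] [Abelian C] [Abelian D]

/-- Natural transformations `F ⟶ G ⟶ H` that evaluate to a short exact sequence at every
projective object. -/
structure ShortExactOnProjectives {F G H : C ⥤ D} (α : F ⟶ G) (β : G ⟶ H) : Prop where
  zero : α ≫ β = 0
  shortExact : ∀ (P : C) [Projective P],
    (ShortComplex.mk (α.app P) (β.app P) (by rw [← NatTrans.comp_app, zero]; rfl)).ShortExact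

namespace ShortExactOnProjectives

variable {F G H : C ⥤ D} [F.Additive] [G.Additive] [H.Additive] {α : F ⟶ G} {β : G ⟶ H}

/-- The short complex of chain complexes obtained by applying `F ⟶ G ⟶ H` to a projective
resolution. -/
noncomputable abbrev complexes (h : ShortExactOnProjectives α β) {X : C}
    (P : ProjectiveResolution X) : ShortComplex (ChainComplex D ℕ) :=
  ShortComplex.mk ((NatTrans.mapHomologicalComplex α _).app P.complex)
    ((NatTrans.mapHomologicalComplex β _).app P.complex) (by
      ext i
      exact congr_app h.zero (P.complex.X i))

lemma complexes_shortExact (h : ShortExactOnProjectives α β) {X : C}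
    (P : ProjectiveResolution X) : (h.complexes P).ShortExact :=
  HomologicalComplex.shortExact_of_degreewise_shortExact _ fun i => h.shortExact (P.complex.X i)

/-- Functoriality of `ShortExactOnProjectives.complexes`. -/
noncomputable def complexesMap (h : ShortExactOnProjectives α β) {X Y : C}
    {P : ProjectiveResolution X} {Q : ProjectiveResolution Y} (φ : P.complex ⟶ Q.complex) :
    h.complexes P ⟶ h.complexes Q where
  τ₁ := (F.mapHomologicalComplex _).map φ
  τ₂ := (G.mapHomologicalComplex _).map φ
  τ₃ := (H.mapHomologicalComplex _).map φ

variable [HasProjectiveResolutions C]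

/-- The connecting morphism between left derived functors. -/
noncomputable def δ (h : ShortExactOnProjectives α β) (n : ℕ) :
    H.leftDerived (n + 1) ⟶ F.leftDerived n where
  app X := ((projectiveResolution X).isoLeftDerivedObj H (n + 1)).hom ≫
    (h.complexes_shortExact (projectiveResolution X)).δ (n + 1) n (by simp) ≫
    ((projectiveResolution X).isoLeftDerivedObj F n).inv
  naturality X Y f := by
    have e := ProjectiveResolution.lift_commutes_zero f (projectiveResolution X)
      (projectiveResolution Y)
    exact comp_three_naturality
      (ProjectiveResolution.isoLeftDerivedObj_hom_naturality f _ _ _ e H (n + 1))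
      (HomologicalComplex.HomologySequence.δ_naturality (h.complexesMap _)
        (h.complexes_shortExact _) (h.complexes_shortExact _) (n + 1) n (by simp)).symm
      (ProjectiveResolution.isoLeftDerivedObj_inv_naturality f _ _ _ e F n).symm

lemma exact₂ (h : ShortExactOnProjectives α β) (n : ℕ) (X : C) :
    ∃ w, (ShortComplex.mk ((NatTrans.leftDerived α n).app X) ((NatTrans.leftDerived β n).app X)
      w).Exact :=
  ((h.complexes_shortExact (projectiveResolution X)).homology_exact₂ n).conj
    ((projectiveResolution X).isoLeftDerivedObj F n)
    ((projectiveResolution X).isoLeftDerivedObj G n)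
    ((projectiveResolution X).isoLeftDerivedObj H n)
    (ProjectiveResolution.leftDerived_app_eq _ _ _)
    (ProjectiveResolution.leftDerived_app_eq _ _ _)

lemma exact₁ (h : ShortExactOnProjectives α β) (n : ℕ) (X : C) :
    ∃ w, (ShortComplex.mk ((h.δ n).app X) ((NatTrans.leftDerived α n).app X) w).Exact :=
  ((h.complexes_shortExact (projectiveResolution X)).homology_exact₁ (n + 1) n (by simp)).conj
    ((projectiveResolution X).isoLeftDerivedObj H (n + 1))
    ((projectiveResolution X).isoLeftDerivedObj F n)
    ((projectiveResolution X).isoLeftDerivedObj G n)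
    rfl (ProjectiveResolution.leftDerived_app_eq _ _ _)

lemma exact₃ (h : ShortExactOnProjectives α β) (n : ℕ) (X : C) :
    ∃ w, (ShortComplex.mk ((NatTrans.leftDerived β (n + 1)).app X) ((h.δ n).app X) w).Exact :=
  ((h.complexes_shortExact (projectiveResolution X)).homology_exact₃ (n + 1) n (by simp)).conj
    ((projectiveResolution X).isoLeftDerivedObj G (n + 1))
    ((projectiveResolution X).isoLeftDerivedObj H (n + 1))
    ((projectiveResolution X).isoLeftDerivedObj F n)
    (ProjectiveResolution.leftDerived_app_eq _ _ _) rfl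

end ShortExactOnProjectives
end

section
variable {C D : Type*} [Category* C] [Category* D] [Abelian C] [Abelian D]
  {F G : C ⥤ D} [F.Additive] [G.Additive] (α : F ⟶ G)

lemma CategoryTheory.ProjectiveResolution.fromLeftDerivedZero'_naturality_functor {X : C}
    (P : ProjectiveResolution X) :
    HomologicalComplex.opcyclesMap ((NatTrans.mapHomologicalComplex α _).app P.complex) 0 ≫
      P.fromLeftDerivedZero' G = P.fromLeftDerivedZero' F ≫ α.app X := by
  rw [← cancel_epi (HomologicalComplex.pOpcycles _ _),
    HomologicalComplex.p_opcyclesMap_assoc, P.pOpcycles_comp_fromLeftDerivedZero',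
    ← Category.assoc, P.pOpcycles_comp_fromLeftDerivedZero']
  exact (α.naturality _).symm

variable [HasProjectiveResolutions C] in
lemma natTrans_fromLeftDerivedZero (X : C) :
    (NatTrans.leftDerived α 0).app X ≫ G.fromLeftDerivedZero.app X =
      F.fromLeftDerivedZero.app X ≫ α.app X := by
  let P := projectiveResolution X
  rw [P.leftDerived_app_eq α, P.fromLeftDerivedZero_eq, P.fromLeftDerivedZero_eq, Category.assoc,
    Category.assoc, Iso.inv_hom_id_assoc, Category.assoc]
  congr 1
  exact comp_two_naturality
    (HomologicalComplex.homologyι_naturality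
      ((NatTrans.mapHomologicalComplex α (.down ℕ)).app P.complex) 0)
    (P.fromLeftDerivedZero'_naturality_functor α)
end

section
variable {R : Type} [CommRing R]

lemma linearYoneda_shortExactOnProjectives {S : ShortComplex (ModuleCat.{0} R)}
    (hS : S.ShortExact) :
    ShortExactOnProjectives (NatTrans.rightOp ((linearYoneda R (ModuleCat.{0} R)).map S.g))
      (NatTrans.rightOp ((linearYoneda R (ModuleCat.{0} R)).map S.f)) := by
  have := hS.mono_f
  have := hS.epi_g
  refine ⟨?_, fun P _ => ?_⟩
  · ext X
    apply Quiver.Hom.unop_inj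
    ext x
    exact (Category.assoc x _ _).trans (by simp; rfl)
  · refine ShortComplex.ShortExact.op
      (S := ShortComplex.mk (((linearYoneda R (ModuleCat.{0} R)).map S.f).app (.op P))
        (((linearYoneda R (ModuleCat.{0} R)).map S.g).app (.op P)) ?_) ?_
    · ext x
      exact (Category.assoc x _ _).trans (by simp; rfl)
    · refine @ShortComplex.ShortExact.mk _ _ _ _ ?_ ?_ ?_
      · rw [ShortComplex.ShortExact.moduleCat_exact_iff_function_exact]
        intro x
        refine ⟨fun hx => ⟨hS.exact.lift x hx, hS.exact.lift_f x hx⟩, ?_⟩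
        rintro ⟨y, rfl⟩
        exact (Category.assoc y _ _).trans (by simp; rfl)
      · rw [ModuleCat.mono_iff_injective]
        intro x y hxy
        exact (cancel_mono S.f).1 hxy
      · rw [ModuleCat.epi_iff_surjective]
        intro x
        exact ⟨Projective.factorThru (P := P) x S.g, Projective.factorThru_comp (P := P) x S.g⟩
end

section
variable {R : Type} [CommRing R] {K : Type} [SmallCategory K] [IsFiltered K]

lemma ModuleCat.exact_of_isColimit {E₁ E₂ E₃ : K ⥤ ModuleCat.{0} R} {c₁ : Cocone E₁}
    {c₂ : Cocone E₂} {c₃ : Cocone E₃} (h₁ : IsColimit c₁) (h₂ : IsColimit c₂) (h₃ : IsColimit c₃)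
    {a : c₁.pt ⟶ c₂.pt} {b : c₂.pt ⟶ c₃.pt} (a' : ∀ k, E₁.obj k ⟶ E₂.obj k)
    (b' : ∀ k, E₂.obj k ⟶ E₃.obj k)
    (b'_nat : ∀ {k l : K} (f : k ⟶ l), E₂.map f ≫ b' l = b' k ≫ E₃.map f)
    (ha : ∀ k, c₁.ι.app k ≫ a = a' k ≫ c₂.ι.app k)
    (hb : ∀ k, c₂.ι.app k ≫ b = b' k ≫ c₃.ι.app k)
    (hex : ∀ k, Function.Exact (a' k) (b' k)) : Function.Exact a b := by
  have ea (k x) : a (c₁.ι.app k x) = c₂.ι.app k (a' k x) := ConcreteCategory.congr_hom (ha k) x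
  have eb (k x) : b (c₂.ι.app k x) = c₃.ι.app k (b' k x) := ConcreteCategory.congr_hom (hb k) x
  intro y
  constructor
  · intro hy
    obtain ⟨k, y, rfl⟩ := Concrete.isColimit_exists_rep _ h₂ y
    rw [eb, ← map_zero (c₃.ι.app k).hom] at hy
    obtain ⟨l, f, g, hfg⟩ := Concrete.isColimit_exists_of_rep_eq _ h₃ _ _ hy
    rw [map_zero, ← ModuleCat.comp_apply, ← b'_nat, ModuleCat.comp_apply] at hfg
    obtain ⟨x, hx⟩ := (hex l _).1 hfg
    refine ⟨c₁.ι.app l x, ?_⟩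
    rw [ea, hx]
    exact ConcreteCategory.congr_hom (c₂.w f) y
  · rintro ⟨x, rfl⟩
    obtain ⟨k, x, rfl⟩ := Concrete.isColimit_exists_rep _ h₁ x
    rw [ea, eb, (hex k _).2 ⟨x, rfl⟩, map_zero]

lemma CategoryTheory.comp_paste {C : Type*} [Category* C] {A B A' B' T : C} {f : A ⟶ A'}
    {g : B ⟶ B'} {p : A ⟶ B} {p' : A' ⟶ B'} {t : B ⟶ T} {t' : B' ⟶ T}
    (h : f ≫ p' = p ≫ g) (h' : g ≫ t' = t) :
    f ≫ p' ≫ t' = (p ≫ t) ≫ 𝟙 T := by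
  rw [← h', reassoc_of% h, Category.comp_id]
end

namespace localCohomology
open Opposite
variable {R : Type} [CommRing R] (J : Ideal R)

/-- The cocone exhibiting the local cohomology of `M` as a colimit of `Ext` modules. -/
noncomputable def evalCocone (i : ℕ) (M : ModuleCat.{0} R) :
    Cocone (diagram (idealPowersDiagram J) i ⋙ (evaluation _ _).obj M) :=
  ((evaluation _ _).obj M).mapCocone (colimit.cocone (diagram (idealPowersDiagram J) i))

/-- `evalCocone` is a colimit cocone. -/
noncomputable def isColimitEvalCocone (i : ℕ) (M : ModuleCat.{0} R) :
    IsColimit (evalCocone J i M) :=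
  isColimitOfPreserves _ (colimit.isColimit _)

lemma evalCocone_naturality (i : ℕ) {M N : ModuleCat.{0} R} (f : M ⟶ N) (k) :
    (evalCocone J i M).ι.app k ≫ (localCohomology J i).map f =
      ((diagram (idealPowersDiagram J) i).obj k).map f ≫ (evalCocone J i N).ι.app k :=
  (((colimit.cocone (diagram (idealPowersDiagram J) i)).ι.app k).naturality f).symm

/-- The connecting homomorphism at the level of `Ext`. -/
noncomputable def extδ {S : ShortComplex (ModuleCat.{0} R)} (hS : S.ShortExact) (i : ℕ)
    (X : (ModuleCat.{0} R)ᵒᵖ) : ((Ext R (ModuleCat.{0} R) i).obj X).obj S.X₃ ⟶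
      ((Ext R (ModuleCat.{0} R) (i + 1)).obj X).obj S.X₁ :=
  (((linearYoneda_shortExactOnProjectives hS).δ i).app X.unop).unop

lemma extδ_naturality {S : ShortComplex (ModuleCat.{0} R)} (hS : S.ShortExact) (i : ℕ)
    {X Y : (ModuleCat.{0} R)ᵒᵖ} (f : X ⟶ Y) :
    ((Ext R (ModuleCat.{0} R) i).map f).app S.X₃ ≫ extδ hS i Y =
      extδ hS i X ≫ ((Ext R (ModuleCat.{0} R) (i + 1)).map f).app S.X₁ :=
  Quiver.Hom.op_inj (((linearYoneda_shortExactOnProjectives hS).δ i).naturality f.unop).symm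

lemma ext_exact₂ {S : ShortComplex (ModuleCat.{0} R)} (hS : S.ShortExact) (i : ℕ)
    (X : (ModuleCat.{0} R)ᵒᵖ) : Function.Exact (((Ext R (ModuleCat.{0} R) i).obj X).map S.f)
      (((Ext R (ModuleCat.{0} R) i).obj X).map S.g) := by
  obtain ⟨w, h⟩ := (linearYoneda_shortExactOnProjectives hS).exact₂ i X.unop
  exact (ShortComplex.ShortExact.moduleCat_exact_iff_function_exact _).1 h.unop

lemma ext_exact₃ {S : ShortComplex (ModuleCat.{0} R)} (hS : S.ShortExact) (i : ℕ)
    (X : (ModuleCat.{0} R)ᵒᵖ) : Function.Exact (((Ext R (ModuleCat.{0} R) i).obj X).map S.g)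
      (extδ hS i X) := by
  obtain ⟨w, h⟩ := (linearYoneda_shortExactOnProjectives hS).exact₁ i X.unop
  exact (ShortComplex.ShortExact.moduleCat_exact_iff_function_exact _).1 h.unop

lemma ext_exact₁ {S : ShortComplex (ModuleCat.{0} R)} (hS : S.ShortExact) (i : ℕ)
    (X : (ModuleCat.{0} R)ᵒᵖ) : Function.Exact (extδ hS i X)
      (((Ext R (ModuleCat.{0} R) (i + 1)).obj X).map S.f) := by
  obtain ⟨w, h⟩ := (linearYoneda_shortExactOnProjectives hS).exact₃ i X.unop
  exact (ShortComplex.ShortExact.moduleCat_exact_iff_function_exact _).1 h.unop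

/-- The connecting homomorphism of local cohomology. -/
noncomputable def δ {S : ShortComplex (ModuleCat.{0} R)} (hS : S.ShortExact) (i : ℕ) :
    (localCohomology J i).obj S.X₃ ⟶ (localCohomology J (i + 1)).obj S.X₁ :=
  (isColimitEvalCocone J i S.X₃).desc
    ⟨_, { app := fun k => extδ hS i _ ≫ (evalCocone J (i + 1) S.X₁).ι.app k
          naturality := fun k l f => by
            exact comp_paste
              (extδ_naturality hS i ((ringModIdeals (idealPowersDiagram J)).op.map f))
              ((evalCocone J (i + 1) S.X₁).w f) }⟩

lemma δ_fac {S : ShortComplex (ModuleCat.{0} R)} (hS : S.ShortExact) (i : ℕ) (k) :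
    (evalCocone J i S.X₃).ι.app k ≫ δ J hS i =
      extδ hS i _ ≫ (evalCocone J (i + 1) S.X₁).ι.app k :=
  (isColimitEvalCocone J i S.X₃).fac _ k

lemma exact₂ {S : ShortComplex (ModuleCat.{0} R)} (hS : S.ShortExact) (i : ℕ) :
    Function.Exact ((localCohomology J i).map S.f) ((localCohomology J i).map S.g) :=
  ModuleCat.exact_of_isColimit (isColimitEvalCocone J i S.X₁) (isColimitEvalCocone J i S.X₂)
    (isColimitEvalCocone J i S.X₃) _ _
    (fun f => (((diagram (idealPowersDiagram J) i).map f).naturality S.g).symm)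
    (evalCocone_naturality J i S.f) (evalCocone_naturality J i S.g) (fun _ => ext_exact₂ hS i _)

lemma exact₃ {S : ShortComplex (ModuleCat.{0} R)} (hS : S.ShortExact) (i : ℕ) :
    Function.Exact ((localCohomology J i).map S.g) (δ J hS i) :=
  ModuleCat.exact_of_isColimit (isColimitEvalCocone J i S.X₂) (isColimitEvalCocone J i S.X₃)
    (isColimitEvalCocone J (i + 1) S.X₁) _ _
    (fun f => extδ_naturality hS i ((ringModIdeals (idealPowersDiagram J)).op.map f))
    (evalCocone_naturality J i S.g) (δ_fac J hS i) (fun _ => ext_exact₃ hS i _)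

lemma exact₁ {S : ShortComplex (ModuleCat.{0} R)} (hS : S.ShortExact) (i : ℕ) :
    Function.Exact (δ J hS i) ((localCohomology J (i + 1)).map S.f) :=
  ModuleCat.exact_of_isColimit (isColimitEvalCocone J i S.X₃) (isColimitEvalCocone J (i + 1) S.X₁)
    (isColimitEvalCocone J (i + 1) S.X₂) _ _
    (fun f => (((diagram (idealPowersDiagram J) (i + 1)).map f).naturality S.f).symm)
    (δ_fac J hS i) (evalCocone_naturality J (i + 1) S.f) (fun _ => ext_exact₁ hS i _)

end localCohomology

section
variable {C D : Type*} [Category* C] [Category* D] [Abelian C] [Abelian D]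

lemma HomologicalComplex.homologyMap_natEndo {ι : Type*} {c : ComplexShape ι} (θ : 𝟭 D ⟶ 𝟭 D)
    {K : HomologicalComplex D c} {φ : K ⟶ K} (hφ : ∀ i, φ.f i = θ.app (K.X i)) (i : ι) :
    HomologicalComplex.homologyMap φ i = θ.app (K.homology i) := by
  have h : HomologicalComplex.cyclesMap φ i = θ.app (K.cycles i) := by
    rw [← cancel_mono (K.iCycles i), HomologicalComplex.cyclesMap_i, hφ]
    exact θ.naturality (K.iCycles i)
  rw [← cancel_epi (K.homologyπ i), HomologicalComplex.homologyπ_naturality, h]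
  exact (θ.naturality (K.homologyπ i)).symm

lemma leftDerived_natEndo [HasProjectiveResolutions C] {F : C ⥤ D} [F.Additive] (θ : 𝟭 D ⟶ 𝟭 D)
    (α : F ⟶ F) (hα : ∀ X, α.app X = θ.app (F.obj X)) (n : ℕ) (X : C) :
    (NatTrans.leftDerived α n).app X = θ.app ((F.leftDerived n).obj X) := by
  let e := (projectiveResolution X).isoLeftDerivedObj F n
  have h := HomologicalComplex.homologyMap_natEndo θ
    (φ := (NatTrans.mapHomologicalComplex α (.down ℕ)).app (projectiveResolution X).complex)
    (fun i => hα _) n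
  rw [ProjectiveResolution.leftDerived_app_eq _ (projectiveResolution X),
    ← cancel_mono e.hom, Category.assoc, Category.assoc, Iso.inv_hom_id, Category.comp_id]
  exact (congr_arg (e.hom ≫ ·) h).trans (θ.naturality e.hom)
end

noncomputable section
open Opposite
variable {R : Type} [CommRing R]

/-- Multiplication by `r` as an endomorphism of the identity of the opposite of `ModuleCat R`. -/
def ModuleCat.smulNatEndoOp (r : R) : 𝟭 (ModuleCat.{0} R)ᵒᵖ ⟶ 𝟭 (ModuleCat.{0} R)ᵒᵖ where
  app X := (r • 𝟙 X.unop).op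
  naturality X Y f := Quiver.Hom.unop_inj (by simp)

lemma localCohomology.map_smul_id (J : Ideal R) (i : ℕ) (M : ModuleCat.{0} R) (r : R) :
    (localCohomology J i).map (r • 𝟙 M) = r • 𝟙 _ := by
  apply (isColimitEvalCocone J i M).hom_ext
  intro k
  have h := leftDerived_natEndo (ModuleCat.smulNatEndoOp r)
    (NatTrans.rightOp ((linearYoneda R (ModuleCat.{0} R)).map (r • 𝟙 M)))
    (fun X => Quiver.Hom.unop_inj (by
      ext x
      exact (Linear.comp_smul _ _ _ x r (𝟙 M)).trans (congr_arg (r • ·) (Category.comp_id x)))) i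
    ((ringModIdeals (idealPowersDiagram J)).op.obj k).unop
  have h' : ((diagram (idealPowersDiagram J) i).obj k).map (r • 𝟙 M) = r • 𝟙 _ :=
    Quiver.Hom.op_inj h
  refine (evalCocone_naturality J i (r • 𝟙 M) k).trans ?_
  rw [h', Linear.smul_comp]
  exact (congr_arg (r • ·) ((Category.id_comp _).trans (Category.comp_id _).symm)).trans
    (Linear.comp_smul _ _ _ _ r _).symm

instance (Y : ModuleCat.{0} R) :
    PreservesFiniteLimits ((linearYoneda R (ModuleCat.{0} R)).obj Y) := by
  have : PreservesFiniteLimits ((linearYoneda R (ModuleCat.{0} R)).obj Y ⋙ forget _) :=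
    inferInstanceAs (PreservesFiniteLimits (yoneda.obj Y))
  exact preservesFiniteLimits_of_reflects_of_preserves _ (forget _)

instance (Y : ModuleCat.{0} R) :
    PreservesFiniteColimits ((linearYoneda R (ModuleCat.{0} R)).obj Y).rightOp :=
  preservesFiniteColimits_rightOp _
end

noncomputable section
open Opposite
variable {R : Type} [CommRing R]

/-- The comparison `Hom(X, Y) ≅ Ext⁰(X, Y)`. -/
def homIsoExtZero (X Y : ModuleCat.{0} R) :
    ModuleCat.of R (X ⟶ Y) ≅ ((Ext R (ModuleCat.{0} R) 0).obj (op X)).obj Y :=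
  (asIso (((linearYoneda R (ModuleCat.{0} R)).obj Y).rightOp.fromLeftDerivedZero.app X)).unop

lemma homIsoExtZero_inv_hom (X Y : ModuleCat.{0} R) (φ : X ⟶ Y) :
    (homIsoExtZero X Y).inv ((homIsoExtZero X Y).hom φ) = φ :=
  ConcreteCategory.congr_hom (homIsoExtZero X Y).hom_inv_id φ

lemma homIsoExtZero_naturality_left {X X' : ModuleCat.{0} R} (f : X' ⟶ X) (Y : ModuleCat.{0} R)
    (φ : X ⟶ Y) : ((Ext R (ModuleCat.{0} R) 0).map f.op).app Y ((homIsoExtZero X Y).hom φ) =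
      (homIsoExtZero X' Y).hom (f ≫ φ) :=
  ConcreteCategory.congr_hom (Quiver.Hom.op_inj
    (((linearYoneda R (ModuleCat.{0} R)).obj Y).rightOp.fromLeftDerivedZero.naturality f)) φ

lemma homIsoExtZero_naturality_right (X : ModuleCat.{0} R) {Y Y' : ModuleCat.{0} R} (f : Y ⟶ Y')
    (φ : X ⟶ Y) : ((Ext R (ModuleCat.{0} R) 0).obj (op X)).map f ((homIsoExtZero X Y).hom φ) =
      (homIsoExtZero X Y').hom (φ ≫ f) :=
  ConcreteCategory.congr_hom (Quiver.Hom.op_inj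
    (natTrans_fromLeftDerivedZero
      (NatTrans.rightOp ((linearYoneda R (ModuleCat.{0} R)).map f)) X)) φ

/-- Evaluation at the class of `1`. -/
def evalOne (I : Ideal R) (Y : ModuleCat.{0} R) :
    ModuleCat.of R (ModuleCat.of R (R ⧸ I) ⟶ Y) ⟶ Y :=
  ModuleCat.ofHom
    { toFun φ := φ (Ideal.Quotient.mk I 1)
      map_add' _ _ := rfl
      map_smul' _ _ := rfl }

namespace localCohomology
variable (J : Ideal R)

lemma eq_homIsoExtZero (k : ℕᵒᵖᵒᵖ) (Y : ModuleCat.{0} R)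
    (x : (diagram (idealPowersDiagram J) 0 ⋙ (evaluation _ _).obj Y).obj k) :
    ∃ φ : ModuleCat.of R (R ⧸ J ^ k.unop.unop) ⟶ Y, x = (homIsoExtZero _ Y).hom φ :=
  ⟨(homIsoExtZero _ Y).inv x, by
    exact (ConcreteCategory.congr_hom
      (homIsoExtZero (ModuleCat.of R (R ⧸ J ^ k.unop.unop)) Y).inv_hom_id x).symm⟩

/-- The comparison map from `H⁰_J(M)` to `M`. -/
def toModule (M : ModuleCat.{0} R) : (localCohomology J 0).obj M ⟶ M :=
  (isColimitEvalCocone J 0 M).desc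
    ⟨_, { app k := (homIsoExtZero _ M).inv ≫ evalOne (J ^ k.unop.unop) M
          naturality k l f := by
            ext x
            obtain ⟨φ, rfl⟩ := eq_homIsoExtZero J k M x
            have h := (congr_arg (homIsoExtZero _ M).inv (homIsoExtZero_naturality_left
              ((ringModIdeals (idealPowersDiagram J)).map f.unop) M φ)).trans
              (homIsoExtZero_inv_hom _ M _)
            exact (congr_arg (evalOne (J ^ l.unop.unop) M) h).trans
              (congr_arg (evalOne (J ^ k.unop.unop) M) (homIsoExtZero_inv_hom _ M φ)).symm }⟩

lemma toModule_ι (M : ModuleCat.{0} R) (k : ℕᵒᵖᵒᵖ) (φ : ModuleCat.of R (R ⧸ J ^ k.unop.unop) ⟶ M) :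
    toModule J M ((evalCocone J 0 M).ι.app k ((homIsoExtZero _ M).hom φ)) =
      φ (Ideal.Quotient.mk _ 1) := by
  refine (ConcreteCategory.congr_hom ((isColimitEvalCocone J 0 M).fac _ k) _).trans ?_
  exact congr_arg (fun ψ => evalOne (J ^ k.unop.unop) M ψ) (homIsoExtZero_inv_hom _ M φ)

lemma exists_rep_zero (M : ModuleCat.{0} R) (y : (localCohomology J 0).obj M) :
    ∃ (k : ℕᵒᵖᵒᵖ) (φ : ModuleCat.of R (R ⧸ J ^ k.unop.unop) ⟶ M),
      y = (evalCocone J 0 M).ι.app k ((homIsoExtZero _ M).hom φ) := by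
  obtain ⟨k, x, rfl⟩ := Concrete.isColimit_exists_rep _ (isColimitEvalCocone J 0 M) y
  obtain ⟨φ, rfl⟩ := eq_homIsoExtZero J k M x
  exact ⟨k, φ, rfl⟩

lemma toModule_naturality {M N : ModuleCat.{0} R} (f : M ⟶ N) (y) :
    toModule J N ((localCohomology J 0).map f y) = f (toModule J M y) := by
  obtain ⟨k, φ, rfl⟩ := exists_rep_zero J M y
  rw [toModule_ι]
  have h := ConcreteCategory.congr_hom (evalCocone_naturality J 0 f k) ((homIsoExtZero _ M).hom φ)
  refine (congr_arg (toModule J N) h).trans ?_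
  refine (congr_arg (fun z => toModule J N ((evalCocone J 0 N).ι.app k z))
    (homIsoExtZero_naturality_right _ f φ)).trans ?_
  exact toModule_ι J N k _

lemma toModule_injective (M : ModuleCat.{0} R) : Function.Injective (toModule J M) := by
  rw [injective_iff_map_eq_zero]
  intro y hy
  obtain ⟨k, φ, rfl⟩ := exists_rep_zero J M y
  rw [toModule_ι] at hy
  have : φ = 0 := by
    refine ModuleCat.hom_ext (LinearMap.ext fun x => ?_)
    obtain ⟨r, rfl⟩ := Ideal.Quotient.mk_surjective x
    have : Ideal.Quotient.mk (J ^ k.unop.unop) r = r • Ideal.Quotient.mk (J ^ k.unop.unop) 1 := by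
      rw [Algebra.smul_def]; simp
    rw [this]
    exact (map_smul φ.hom r _).trans (by rw [hy]; simp)
  rw [this]
  exact (congr_arg _ (map_zero _)).trans (map_zero _)

lemma mem_range_toModule (M : ModuleCat.{0} R) (z : M) :
    z ∈ Set.range (toModule J M) ↔ ∃ n : ℕ, ∀ r ∈ J ^ n, r • z = 0 := by
  constructor
  · rintro ⟨y, rfl⟩
    obtain ⟨k, φ, rfl⟩ := exists_rep_zero J M y
    refine ⟨k.unop.unop, fun r hr => ?_⟩
    rw [toModule_ι]
    refine (map_smul φ.hom r _).symm.trans ?_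
    have : r • Ideal.Quotient.mk (J ^ k.unop.unop) 1 = 0 := by
      rw [Algebra.smul_def]; simpa using Ideal.Quotient.eq_zero_iff_mem.2 hr
    exact (congr_arg φ this).trans (map_zero φ.hom)
  · rintro ⟨n, hn⟩
    refine ⟨(evalCocone J 0 M).ι.app (op (op n)) ((homIsoExtZero _ M).hom
      (ModuleCat.ofHom (Submodule.liftQ (J ^ n) (LinearMap.toSpanSingleton R M z) ?_))), ?_⟩
    · intro r hr
      exact hn r hr
    · refine (toModule_ι J M (op (op n)) _).trans ?_
      exact one_smul R z

end localCohomology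
end

section
variable {C D : Type*} [Category* C] [Category* D] [Abelian C] [Abelian D]

lemma CategoryTheory.Functor.isZero_leftDerived_succ [HasProjectiveResolutions C] (F : C ⥤ D)
    [F.Additive] [F.PreservesHomology] (n : ℕ) (X : C) :
    IsZero ((F.leftDerived (n + 1)).obj X) := by
  let P := projectiveResolution X
  refine IsZero.of_iso ?_ (P.isoLeftDerivedObj F (n + 1))
  have h := (P.complex_exactAt_succ n).map F
  exact HomologicalComplex.ExactAt.isZero_homology
    (K := (F.mapHomologicalComplex (.down ℕ)).obj P.complex) h
end

section
open Opposite
variable {R : Type} [CommRing R]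

lemma linearYoneda_rightOp_preservesHomology (E : ModuleCat.{0} R) [Injective E] :
    ((linearYoneda R (ModuleCat.{0} R)).obj E).rightOp.PreservesHomology := by
  have : ((linearYoneda R (ModuleCat.{0} R)).obj E).rightOp.PreservesMonomorphisms := by
    refine ⟨fun {X Y} f hf => ?_⟩
    have : Epi (((linearYoneda R (ModuleCat.{0} R)).obj E).map f.op) := by
      rw [ModuleCat.epi_iff_surjective]
      exact fun x => ⟨Injective.factorThru (J := E) x f, Injective.comp_factorThru (J := E) x f⟩
    exact inferInstanceAs (Mono (((linearYoneda R (ModuleCat.{0} R)).obj E).map f.op).op)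
  exact Functor.preservesHomology_of_preservesMonos_and_cokernels _

lemma localCohomology.subsingleton_of_injective (J : Ideal R) (E : ModuleCat.{0} R)
    [Injective E] (i : ℕ) : Subsingleton ((localCohomology J (i + 1)).obj E) := by
  have := linearYoneda_rightOp_preservesHomology E
  have h (y : (localCohomology J (i + 1)).obj E) : y = 0 := by
    obtain ⟨k, x, rfl⟩ := Concrete.isColimit_exists_rep _ (isColimitEvalCocone J (i + 1) E) y
    have : Subsingleton ((diagram (idealPowersDiagram J) (i + 1) ⋙ (evaluation _ _).obj E).obj k) :=
      ModuleCat.isZero_iff_subsingleton.1 (Functor.isZero_leftDerived_succ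
        ((linearYoneda R (ModuleCat.{0} R)).obj E).rightOp i _).unop
    rw [Subsingleton.elim x 0]
    exact map_zero (ModuleCat.Hom.hom _)
  exact ⟨fun x y => (h x).trans (h y).symm⟩
end

noncomputable section
namespace localCohomology
variable {R : Type} [CommRing R] (J : Ideal R) {A B C : Type} [AddCommGroup A] [Module R A]
  [AddCommGroup B] [Module R B] [AddCommGroup C] [Module R C]

/-- The `i`-th local cohomology of an unbundled module. -/
abbrev ofModule (i : ℕ) (M : Type) [AddCommGroup M] [Module R M] : ModuleCat.{0} R :=
  (localCohomology J i).obj (ModuleCat.of R M)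

/-- The linear map induced on local cohomology. -/
def lmap (i : ℕ) (f : A →ₗ[R] B) : ofModule J i A →ₗ[R] ofModule J i B :=
  ((localCohomology J i).map (ModuleCat.ofHom f)).hom

lemma lmap_comp (i : ℕ) (g : B →ₗ[R] C) (f : A →ₗ[R] B) (x : ofModule J i A) :
    lmap J i (g ∘ₗ f) x = lmap J i g (lmap J i f x) := by
  simp [lmap, ModuleCat.ofHom_comp]

lemma lmap_smul_id (i : ℕ) (r : R) (x : ofModule J i A) :
    lmap J i (r • LinearMap.id) x = r • x :=
  ConcreteCategory.congr_hom (map_smul_id J i (ModuleCat.of R A) r) x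

lemma exists_connecting {f : A →ₗ[R] B} {g : B →ₗ[R] C} (hf : Function.Injective f)
    (hg : Function.Surjective g) (hfg : Function.Exact f g) (i : ℕ) :
    ∃ δ : ofModule J i C →ₗ[R] ofModule J (i + 1) A, Function.Exact (lmap J i g) δ ∧
      Function.Exact δ (lmap J (i + 1) f) := by
  have hS : (ShortComplex.mk (ModuleCat.ofHom f) (ModuleCat.ofHom g)
      (ModuleCat.hom_ext hfg.linearMap_comp_eq_zero)).ShortExact :=
    ModuleCat.shortComplex_shortExact _ hfg hf hg
  exact ⟨(δ J hS i).hom, exact₃ J hS i, exact₁ J hS i⟩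

lemma exact_lmap {f : A →ₗ[R] B} {g : B →ₗ[R] C} (hf : Function.Injective f)
    (hg : Function.Surjective g) (hfg : Function.Exact f g) (i : ℕ) :
    Function.Exact (lmap J i f) (lmap J i g) := by
  have hS : (ShortComplex.mk (ModuleCat.ofHom f) (ModuleCat.ofHom g)
      (ModuleCat.hom_ext hfg.linearMap_comp_eq_zero)).ShortExact :=
    ModuleCat.shortComplex_shortExact _ hfg hf hg
  exact exact₂ J hS i

/-- Every element of `M` is annihilated by a power of `J`. -/
def IsPowTorsion (M : Type) [AddCommGroup M] [Module R M] : Prop :=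
  ∀ z : M, ∃ n : ℕ, ∀ r ∈ J ^ n, r • z = 0

/-- The submodule of elements annihilated by a power of `J`. -/
def powTorsion (M : Type) [AddCommGroup M] [Module R M] : Submodule R M where
  carrier := {z | ∃ n : ℕ, ∀ r ∈ J ^ n, r • z = 0}
  zero_mem' := ⟨0, by simp⟩
  add_mem' := by
    rintro x y ⟨n, hn⟩ ⟨m, hm⟩
    refine ⟨max n m, fun r hr => ?_⟩
    rw [smul_add, hn r (Ideal.pow_le_pow_right (le_max_left _ _) hr),
      hm r (Ideal.pow_le_pow_right (le_max_right _ _) hr), add_zero]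
  smul_mem' := by
    rintro a x ⟨n, hn⟩
    exact ⟨n, fun r hr => by rw [smul_comm, hn r hr, smul_zero]⟩

lemma isPowTorsion_powTorsion (M : Type) [AddCommGroup M] [Module R M] :
    IsPowTorsion J (powTorsion J M) := fun ⟨_, n, hn⟩ => ⟨n, fun r hr => Subtype.ext (hn r hr)⟩

variable {J} in
lemma IsPowTorsion.of_surjective (h : IsPowTorsion J A) {f : A →ₗ[R] B}
    (hf : Function.Surjective f) : IsPowTorsion J B := fun z => by
  obtain ⟨z, rfl⟩ := hf z
  obtain ⟨n, hn⟩ := h z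
  exact ⟨n, fun r hr => by rw [← map_smul, hn r hr, map_zero]⟩

/-- The comparison map from `H⁰_J(M)` to `M`. -/
def ofModuleZero (M : Type) [AddCommGroup M] [Module R M] : ofModule J 0 M →ₗ[R] M :=
  (toModule J (ModuleCat.of R M)).hom

lemma ofModuleZero_lmap (f : A →ₗ[R] B) (y : ofModule J 0 A) :
    ofModuleZero J B (lmap J 0 f y) = f (ofModuleZero J A y) :=
  toModule_naturality J (ModuleCat.ofHom f) y

lemma ofModuleZero_injective : Function.Injective (ofModuleZero J A) :=
  toModule_injective J _

lemma exists_ofModuleZero_eq {z : A} {n : ℕ} (hz : ∀ r ∈ J ^ n, r • z = 0) :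
    ∃ y, ofModuleZero J A y = z := (mem_range_toModule J (ModuleCat.of R A) z).2 ⟨n, hz⟩

lemma lmap_zero_surjective (hA : IsPowTorsion J A) {g : A →ₗ[R] B} (hg : Function.Surjective g) :
    Function.Surjective (lmap J 0 g) := fun y => by
  obtain ⟨e, he⟩ := hg (ofModuleZero J B y)
  obtain ⟨n, hn⟩ := hA e
  obtain ⟨x, rfl⟩ := exists_ofModuleZero_eq J hn
  exact ⟨x, ofModuleZero_injective J (by rw [ofModuleZero_lmap, he])⟩

lemma powTorsion_injective [IsNoetherianRing R] (E : Type) [AddCommGroup E] [Module R E]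
    [Module.Injective R E] : Module.Injective R (powTorsion J E) := by
  refine Module.Baer.injective fun I g => ?_
  obtain ⟨s, hs⟩ := (inferInstance : Module.Finite R I).fg_top
  have hn : ∃ n : ℕ, ∀ r ∈ J ^ n, ∀ x : I, r • g x = 0 := by
    choose N hN using fun x : I => (isPowTorsion_powTorsion J E) (g x)
    refine ⟨s.sup N, fun r hr x => ?_⟩
    have hx : x ∈ Submodule.span R (s : Set I) := hs ▸ Submodule.mem_top
    induction hx using Submodule.span_induction with
    | mem x hx => exact hN x r (Ideal.pow_le_pow_right (Finset.le_sup hx) hr)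
    | zero => simp
    | add x y _ _ hx hy => simp [hx, hy]
    | smul a x _ hx => rw [map_smul, smul_comm, hx, smul_zero]
  obtain ⟨n, hn⟩ := hn
  obtain ⟨k, hk⟩ := J.exists_pow_inf_eq_pow_smul (M := R) I
  have key (x : I) (hx : (x : R) ∈ J ^ (n + k)) : g x = 0 := by
    have h1 : (x : R) ∈ J ^ n • I := by
      have h2 : (x : R) ∈ J ^ (n + k) • (⊤ : Submodule R R) ⊓ I := ⟨by simpa using hx, x.2⟩
      rw [hk _ (Nat.le_add_left _ _), Nat.add_sub_cancel] at h2
      exact (show _ ≤ J ^ n • I from smul_mono_right (J ^ n) inf_le_right) h2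
    have h3 : ∀ y ∈ J ^ n • I, ∀ h : y ∈ I, g ⟨y, h⟩ = 0 := by
      intro y hy
      induction hy using Submodule.smul_induction_on' with
      | smul r hr x hx => exact fun h => (g.map_smul r ⟨x, hx⟩).trans (hn r hr _)
      | add x hx y hy ihx ihy =>
        intro h
        have h1 := Submodule.smul_le_right hx
        have h2 := Submodule.smul_le_right hy
        exact (g.map_add ⟨x, h1⟩ ⟨y, h2⟩).trans (by rw [ihx, ihy, add_zero])
    exact h3 _ h1 x.2
  let q : I →ₗ[R] R ⧸ J ^ (n + k) := Submodule.mkQ _ ∘ₗ I.subtype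
  have hq : LinearMap.ker q ≤ LinearMap.ker ((powTorsion J E).subtype ∘ₗ g) := fun x hx => by
    have : g x = 0 := key x (Ideal.Quotient.eq_zero_iff_mem.1 hx)
    simp [this]
  obtain ⟨h, hh⟩ := Module.Injective.out ((LinearMap.ker q).liftQ q le_rfl)
    (LinearMap.ker_eq_bot.1 (Submodule.ker_liftQ_eq_bot _ _ _ le_rfl))
    ((LinearMap.ker q).liftQ ((powTorsion J E).subtype ∘ₗ g) hq)
  have hmem : ∀ x, (h ∘ₗ Submodule.mkQ (J ^ (n + k))) x ∈ powTorsion J E := fun x =>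
    ⟨n + k, fun r hr => by
      rw [← map_smul, LinearMap.comp_apply]
      have : Submodule.mkQ (J ^ (n + k)) (r • x) = 0 := by
        exact Ideal.Quotient.eq_zero_iff_mem.2 (Ideal.mul_mem_right x _ hr)
      rw [this, map_zero]⟩
  refine ⟨LinearMap.codRestrict _ (h ∘ₗ Submodule.mkQ (J ^ (n + k))) hmem, fun x hx => ?_⟩
  exact Subtype.ext (hh (Submodule.Quotient.mk ⟨x, hx⟩))

/-- A `J`-power torsion module embeds into a `J`-power torsion injective module. -/
lemma exists_injective_isPowTorsion [IsNoetherianRing R] {K : Type} [AddCommGroup K] [Module R K]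
    (hK : IsPowTorsion J K) : ∃ (E : ModuleCat.{0} R) (f : K →ₗ[R] E),
      Module.Injective R E ∧ IsPowTorsion J E ∧ Function.Injective f := by
  let E := Injective.under (ModuleCat.of R K)
  have : Module.Injective R E :=
    @Module.injective_module_of_injective_object R E _ _ _ (inferInstanceAs (Injective E))
  have hι : Function.Injective (Injective.ι (ModuleCat.of R K)) :=
    (ModuleCat.mono_iff_injective _).1 inferInstance
  refine ⟨ModuleCat.of R (powTorsion J E),
    LinearMap.codRestrict _ (Injective.ι (ModuleCat.of R K)).hom ?_, powTorsion_injective J E,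
    isPowTorsion_powTorsion J E, fun x y hxy => hι (congr_arg Subtype.val hxy)⟩
  intro z
  obtain ⟨n, hn⟩ := hK z
  exact ⟨n, fun r hr => by rw [← map_smul, hn r hr, map_zero]⟩

theorem subsingleton_of_isPowTorsion [IsNoetherianRing R] (i : ℕ) {K : Type} [AddCommGroup K]
    [Module R K] (hK : IsPowTorsion J K) : Subsingleton (ofModule J (i + 1) K) := by
  induction i generalizing K with
  | zero =>
    obtain ⟨E, f, hE, hEt, hf⟩ := exists_injective_isPowTorsion J hK
    have : Injective E := Module.injective_object_of_injective_module R E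
    have hE1 : Subsingleton (ofModule J 1 E) := subsingleton_of_injective J E 0
    obtain ⟨δ, h1, h2⟩ := exists_connecting J hf (Submodule.mkQ_surjective (LinearMap.range f))
      (LinearMap.exact_map_mkQ_range f) 0
    refine subsingleton_of_forall_eq 0 fun y => ?_
    obtain ⟨x, rfl⟩ := (h2 y).1 (Subsingleton.elim _ _)
    exact (h1 x).2 (lmap_zero_surjective J hEt (Submodule.mkQ_surjective _) x)
  | succ i ih =>
    obtain ⟨E, f, hE, hEt, hf⟩ := exists_injective_isPowTorsion J hK
    have : Injective E := Module.injective_object_of_injective_module R E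
    have hE1 : Subsingleton (ofModule J (i + 2) E) := subsingleton_of_injective J E (i + 1)
    obtain ⟨δ, h1, h2⟩ := exists_connecting J hf (Submodule.mkQ_surjective (LinearMap.range f))
      (LinearMap.exact_map_mkQ_range f) (i + 1)
    have := ih (hEt.of_surjective (Submodule.mkQ_surjective (LinearMap.range f)))
    refine subsingleton_of_forall_eq 0 fun y => ?_
    obtain ⟨x, rfl⟩ := (h2 y).1 (Subsingleton.elim _ _)
    rw [Subsingleton.elim x 0, map_zero]

end localCohomology
end

section
variable {R : Type} [CommRing R]

lemma Ideal.not_lt_of_mem_minimalPrimes_sup_span [IsNoetherianRing R] {p q' q : Ideal R} [p.IsPrime]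
    [q'.IsPrime] {x : R} (hq : q ∈ (p ⊔ Ideal.span {x}).minimalPrimes) (h : p < q') : ¬ q' < q := by
  intro hlt
  have hqp : q.IsPrime := hq.1.1
  have hker (I : Ideal R) (hI : p ≤ I) : RingHom.ker (Ideal.Quotient.mk p) ≤ I := by
    rwa [Ideal.mk_ker]
  have h1 : (q'.map (Ideal.Quotient.mk p)).IsPrime :=
    Ideal.map_isPrime_of_surjective Ideal.Quotient.mk_surjective (hker _ h.le)
  have h2 : (q.map (Ideal.Quotient.mk p)).IsPrime :=
    Ideal.map_isPrime_of_surjective Ideal.Quotient.mk_surjective (hker _ (h.trans hlt).le)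
  have hmap {I I' : Ideal R} (hI : p ≤ I) (hI' : I < I') :
      I.map (Ideal.Quotient.mk p) < I'.map (Ideal.Quotient.mk p) := by
    refine lt_of_le_of_ne (Ideal.map_mono hI'.le) fun e => hI'.ne ?_
    have := congr_arg (Ideal.comap (Ideal.Quotient.mk p)) e
    rwa [Ideal.comap_map_of_surjective _ Ideal.Quotient.mk_surjective,
      Ideal.comap_map_of_surjective _ Ideal.Quotient.mk_surjective, ← RingHom.ker_eq_comap_bot,
      Ideal.mk_ker, sup_eq_left.2 hI, sup_eq_left.2 (hI.trans hI'.le)] at this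
  have h3 := Ideal.map_height_le_one_of_mem_minimalPrimes hq
  have h4 := Ideal.height_add_one_le_of_lt_of_isPrime (hmap h.le hlt)
  have h5 : (⊥ : Ideal (R ⧸ p)) < q'.map (Ideal.Quotient.mk p) := by
    simpa [Ideal.map_quotient_self] using hmap le_rfl h
  have h6 := Ideal.height_add_one_le_of_lt_of_isPrime h5
  have h7 : (1 : ℕ∞) + 1 ≤ 1 := (add_le_add_left (le_add_self.trans h6) 1).trans (h4.trans h3)
  exact absurd h7 (by decide)

/-- A minimal prime over `p + (y)`, where `p` is an associated prime and `y` is regular, is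
associated to the quotient by `y`. -/
lemma associatedPrimes_quotSMulTop [IsNoetherianRing R] {M : Type} [AddCommGroup M] [Module R M]
    [Module.Finite R M] {p q : Ideal R} {y : R} (hp : p ∈ associatedPrimes R M)
    (hy : IsSMulRegular M y) (hq : q ∈ (p ⊔ Ideal.span {y}).minimalPrimes) :
    q ∈ associatedPrimes R (QuotSMulTop y M) := by
  obtain ⟨hpp, z, hz⟩ := isAssociatedPrime_iff.1 hp
  let L := Submodule.torsionBySet R M (p : Set R)
  have hz' (r : R) : r ∈ p ↔ r • z = 0 := by
    rw [hz, Submodule.mem_colon_singleton, Submodule.mem_bot]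
  have hL (w : M) : w ∈ L ↔ ∀ r ∈ p, r • w = 0 := by simp [L, Submodule.mem_torsionBySet_iff]
  have hann : Module.annihilator R L = p := by
    refine le_antisymm (fun r hr => ?_) fun r hr => ?_
    · exact (hz' r).2 (congr_arg Subtype.val (Module.mem_annihilator.1 hr
        ⟨z, (hL z).2 fun r hr => (hz' r).1 hr⟩))
    · exact Module.mem_annihilator.2 fun w => Subtype.ext ((hL w).1 w.2 r hr)
  have hinj : Function.Injective (QuotSMulTop.map y L.subtype) := by
    rw [injective_iff_map_eq_zero]
    intro l hl
    obtain ⟨l, rfl⟩ := Submodule.Quotient.mk_surjective _ l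
    obtain ⟨w, -, hw⟩ := (Submodule.mem_smul_pointwise_iff_exists _ _ _).1
      ((Submodule.Quotient.mk_eq_zero _).1 hl)
    refine (Submodule.Quotient.mk_eq_zero _).2
      ((Submodule.mem_smul_pointwise_iff_exists _ _ _).2 ⟨⟨w, (hL w).2 fun r hr => hy ?_⟩, trivial,
        Subtype.ext hw⟩)
    simp only [smul_zero]
    rw [smul_comm, hw]
    exact (hL _).1 l.2 r hr
  refine associatedPrimes.subset_of_injective hinj ?_
  apply Module.associatedPrimes.minimalPrimes_annihilator_subset_associatedPrimes
  have h := Module.support_quotSMulTop (M := L) y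
  rw [Module.support_eq_zeroLocus, Module.support_eq_zeroLocus, hann,
    ← PrimeSpectrum.zeroLocus_span {y}, ← PrimeSpectrum.zeroLocus_sup,
    PrimeSpectrum.zeroLocus_eq_iff] at h
  rwa [← Ideal.radical_minimalPrimes, h, Ideal.radical_minimalPrimes]

lemma exists_isSMulRegular_forall_notMem [IsNoetherianRing R] [IsLocalRing R] {M : Type}
    [AddCommGroup M] [Module R M] [Module.Finite R M] (hM : maximalIdeal R ∉ associatedPrimes R M)
    {S : Set (Ideal R)} (hS : S.Finite) (hS' : ∀ p ∈ S, p.IsPrime ∧ p ≠ maximalIdeal R) :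
    ∃ y ∈ maximalIdeal R, IsSMulRegular M y ∧ ∀ p ∈ S, y ∉ p := by
  have hT := (associatedPrimes.finite R M).union hS
  have h1 : ∀ p ∈ associatedPrimes R M ∪ S, p.IsPrime ∧ p ≠ maximalIdeal R := by
    rintro p (hp | hp)
    · exact ⟨hp.1, fun e => hM (e ▸ hp)⟩
    · exact hS' p hp
  have h2 := (Ideal.subset_union_prime_finite hT (f := id) ⊤ ⊤ (I := maximalIdeal R)
    fun p hp _ _ => (h1 p hp).1).not.2 (by
      rintro ⟨p, hp, hle⟩
      exact (h1 p hp).2 (((maximalIdeal.isMaximal R).eq_of_le (h1 p hp).1.ne_top hle).symm))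
  obtain ⟨y, hy, hy'⟩ := Set.not_subset.1 h2
  simp only [Set.mem_iUnion, not_exists] at hy'
  refine ⟨y, hy, ?_, fun p hp => hy' p (Or.inr hp)⟩
  by_contra hreg
  have : y ∈ ⋃ p ∈ associatedPrimes R M, (p : Set R) := by
    rw [biUnion_associatedPrimes_eq_compl_regular]; exact hreg
  simp only [Set.mem_iUnion] at this
  obtain ⟨p, hp, hyp⟩ := this
  exact hy' p (Or.inl hp) hyp
end

namespace localCohomology
variable {R : Type} [CommRing R] (J : Ideal R) {A B C : Type} [AddCommGroup A] [Module R A]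
  [AddCommGroup B] [Module R B] [AddCommGroup C] [Module R C]

lemma smul_smul_eq_zero_of_exact {f : A →ₗ[R] B} {g : B →ₗ[R] C} (hf : Function.Injective f)
    (hg : Function.Surjective g) (hfg : Function.Exact f g) {i : ℕ} {a b : R}
    (ha : ∀ y : ofModule J i B, a • y = 0) (hb : ∀ y : ofModule J (i + 1) A, b • y = 0)
    (y : ofModule J i C) : a • b • y = 0 := by
  obtain ⟨δ, h1, h2⟩ := exists_connecting J hf hg hfg i
  obtain ⟨z, hz⟩ := (h1 (b • y)).1 (by rw [map_smul, hb])
  rw [← hz, ← map_smul, ha, map_zero]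

lemma lmap_mkQ_surjective [IsNoetherianRing R] {K : Submodule R A} (hK : IsPowTorsion J K) (i : ℕ) :
    Function.Surjective (lmap J i K.mkQ) := fun y => by
  obtain ⟨δ, h1, h2⟩ := exists_connecting J K.subtype_injective K.mkQ_surjective
    (LinearMap.exact_subtype_mkQ K) i
  have := subsingleton_of_isPowTorsion J i hK
  exact (h1 y).1 (Subsingleton.elim _ _)

lemma lmap_mkQ_injective [IsNoetherianRing R] {K : Submodule R A} (hK : IsPowTorsion J K) (i : ℕ) :
    Function.Injective (lmap J (i + 1) K.mkQ) := by
  rw [injective_iff_map_eq_zero]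
  intro y hy
  obtain ⟨z, rfl⟩ := (exact_lmap J K.subtype_injective K.mkQ_surjective
    (LinearMap.exact_subtype_mkQ K) (i + 1) y).1 hy
  have := subsingleton_of_isPowTorsion J i hK
  rw [Subsingleton.elim z 0, map_zero]

lemma powTorsion_quotient_eq_bot [IsNoetherianRing R] : powTorsion J (A ⧸ powTorsion J A) = ⊥ := by
  rw [eq_bot_iff]
  rintro z ⟨n, hn⟩
  obtain ⟨y, rfl⟩ := exists_ofModuleZero_eq J hn
  obtain ⟨w, rfl⟩ := lmap_mkQ_surjective J (isPowTorsion_powTorsion J A) 0 y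
  rw [ofModuleZero_lmap, Submodule.mem_bot]
  exact (Submodule.Quotient.mk_eq_zero _).2 ((mem_range_toModule J (ModuleCat.of R A) _).1 ⟨w, rfl⟩)

/-- An associated prime not containing `J` stays associated after dividing out `J`-power
torsion. -/
lemma mem_associatedPrimes_quotient_powTorsion [IsNoetherianRing R] {p : Ideal R}
    (hp : p ∈ associatedPrimes R A) (hJ : ¬ J ≤ p) :
    p ∈ associatedPrimes R (A ⧸ powTorsion J A) := by
  obtain ⟨hpp, z, hz⟩ := isAssociatedPrime_iff.1 hp
  have hz' (r : R) : r ∈ p ↔ r • z = 0 := by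
    rw [hz, Submodule.mem_colon_singleton, Submodule.mem_bot]
  refine isAssociatedPrime_iff.2 ⟨hpp, Submodule.Quotient.mk z, ?_⟩
  ext r
  rw [Submodule.mem_colon_singleton, Submodule.mem_bot, ← Submodule.Quotient.mk_smul,
    Submodule.Quotient.mk_eq_zero]
  constructor
  · intro hr
    rw [(hz' r).1 hr]
    exact Submodule.zero_mem _
  · rintro ⟨n, hn⟩
    have h : J ^ n * Ideal.span {r} ≤ p := by
      rw [Ideal.mul_le]
      intro a ha b hb
      obtain ⟨c, rfl⟩ := Ideal.mem_span_singleton'.1 hb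
      rw [hz', mul_smul, mul_smul, smul_comm a, hn a ha, smul_zero]
    rcases hpp.mul_le.1 h with h | h
    · exact absurd (hpp.le_of_pow_le h) hJ
    · exact h (Ideal.mem_span_singleton_self r)

variable [IsNoetherianRing R] [IsLocalRing R]

/-- If `p ≠ m` is an associated prime of `M` such that `m` is the only minimal prime over
`p + (y)` with `y` regular, then `p` contains any `x` killing the first two local cohomologies. -/
lemma mem_of_radical_sup_span {M : Type} [AddCommGroup M] [Module R M] [Module.Finite R M]
    {p : Ideal R} (hp : p ∈ associatedPrimes R M) {x y : R} (hy : IsSMulRegular M y)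
    (hym : y ∈ maximalIdeal R) (hrad : maximalIdeal R ≤ (p ⊔ Ideal.span {y}).radical)
    (hx₀ : ∀ z : ofModule (maximalIdeal R) 0 M, x • z = 0)
    (hx₁ : ∀ z : ofModule (maximalIdeal R) 1 M, x • z = 0) : x ∈ p := by
  obtain ⟨hpp, z, hz⟩ := isAssociatedPrime_iff.1 hp
  have hz' (r : R) : r ∈ p ↔ r • z = 0 := by
    rw [hz, Submodule.mem_colon_singleton, Submodule.mem_bot]
  have key (n : ℕ) : x • x • z ∈ (Ideal.span {y}) ^ n • (⊤ : Submodule R M) := by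
    let g : M →ₗ[R] M := LinearMap.lsmul R M (y ^ n)
    have hg : Function.Injective g := hy.pow n
    have hrange : LinearMap.range g = (Ideal.span {y}) ^ n • (⊤ : Submodule R M) := by
      rw [Ideal.span_singleton_pow, Submodule.ideal_span_singleton_smul]
      ext w
      simp [g, Submodule.mem_smul_pointwise_iff_exists]
    have htors : ∃ N : ℕ, ∀ r ∈ maximalIdeal R ^ N, r • (LinearMap.range g).mkQ z = 0 := by
      have hrad' : maximalIdeal R ≤ (p ⊔ Ideal.span {y ^ n}).radical := by
        refine hrad.trans (Ideal.radical_le_radical_iff.2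
          (sup_le (le_sup_left.trans Ideal.le_radical) ?_))
        rw [Ideal.span_singleton_le_iff_mem]
        exact ⟨n, Ideal.mem_sup_right (Ideal.mem_span_singleton_self _)⟩
      obtain ⟨N, hN⟩ := Ideal.exists_pow_le_of_le_radical_of_fg hrad' (IsNoetherian.noetherian _)
      refine ⟨N, fun r hr => ?_⟩
      obtain ⟨a, ha, b, hb, rfl⟩ := Submodule.mem_sup.1 (hN hr)
      obtain ⟨c, rfl⟩ := Ideal.mem_span_singleton'.1 hb
      rw [← map_smul, add_smul, (hz' a).1 ha, zero_add, mul_smul, smul_comm]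
      exact (Submodule.Quotient.mk_eq_zero _).2 ⟨c • z, rfl⟩
    obtain ⟨N, hN⟩ := htors
    obtain ⟨w, hw⟩ := exists_ofModuleZero_eq (maximalIdeal R) hN
    have h0 := smul_smul_eq_zero_of_exact (maximalIdeal R) hg (Submodule.mkQ_surjective _)
      (LinearMap.exact_map_mkQ_range g) hx₀ hx₁ w
    rw [← hrange]
    refine (Submodule.Quotient.mk_eq_zero _).1 ?_
    have := congr_arg (ofModuleZero (maximalIdeal R) _) h0
    rw [map_smul, map_smul, hw, map_zero] at this
    exact this
  have h1 : x • x • z ∈ ⨅ n : ℕ, (Ideal.span {y}) ^ n • (⊤ : Submodule R M) :=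
    (Submodule.mem_iInf _).2 key
  rw [Ideal.iInf_pow_smul_eq_bot_of_isLocalRing _ (fun h => by
    exact (maximalIdeal.isMaximal R).ne_top
      (top_le_iff.1 (h ▸ (Ideal.span_singleton_le_iff_mem _).2 hym))),
    Submodule.mem_bot, ← mul_smul, ← hz'] at h1
  exact (hpp.mem_or_mem h1).elim id id

/-- An element annihilating the local cohomology modules `Hⁱ(M)` for `i ≤ k` lies in every
nonmaximal associated prime of `M` of dimension at most `k`. -/
theorem mem_of_coheight_le (k : ℕ) {M : Type} [AddCommGroup M] [Module R M] [Module.Finite R M]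
    (p : PrimeSpectrum R) (hp : p.asIdeal ∈ associatedPrimes R M) (hpm : p.asIdeal ≠ maximalIdeal R)
    (hk : Order.coheight p ≤ k) {x : R}
    (hx : ∀ i ≤ k, ∀ z : ofModule (maximalIdeal R) i M, x • z = 0) : x ∈ p.asIdeal := by
  induction k generalizing M p x with
  | zero =>
    have h : IsMax p := Order.coheight_eq_zero.1 (by simpa using hk)
    have : p ≤ closedPoint R := le_maximalIdeal p.2.ne_top
    exact absurd (le_antisymm this (h this)) fun e => hpm (congr_arg PrimeSpectrum.asIdeal e)
  | succ k ih =>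
    have hle : p.asIdeal ≤ maximalIdeal R := le_maximalIdeal p.2.ne_top
    have hlt : ¬ maximalIdeal R ≤ p.asIdeal := fun h => hpm (le_antisymm hle h)
    by_contra hxp
    obtain ⟨t, htm, htp⟩ := Set.not_subset.1 hlt
    have hxp' : t * x ∉ p.asIdeal := fun h => (p.2.mem_or_mem h).elim htp hxp
    let M' := M ⧸ powTorsion (maximalIdeal R) M
    have hp' := mem_associatedPrimes_quotient_powTorsion (maximalIdeal R) hp hlt
    have hx' : ∀ i ≤ k + 1, ∀ z : ofModule (maximalIdeal R) i M', (t * x) • z = 0 := by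
      intro i hi z
      obtain ⟨w, rfl⟩ := lmap_mkQ_surjective _ (isPowTorsion_powTorsion (maximalIdeal R) M) i z
      rw [← map_smul, mul_smul, hx i hi, smul_zero, map_zero]
    have hm : maximalIdeal R ∉ associatedPrimes R M' := by
      intro h
      obtain ⟨hpp, z, hz⟩ := isAssociatedPrime_iff.1 h
      have h1 : z ∈ powTorsion (maximalIdeal R) M' := ⟨1, fun r hr => by
        rw [pow_one, hz, Submodule.mem_colon_singleton] at hr
        exact hr⟩
      rw [powTorsion_quotient_eq_bot, Submodule.mem_bot] at h1
      exact hpp.ne_top (by rw [hz, h1]; simp)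
    let S := (p.asIdeal ⊔ Ideal.span {t * x}).minimalPrimes \ {maximalIdeal R}
    obtain ⟨y, hym, hy, hyS⟩ := exists_isSMulRegular_forall_notMem hm (S := S)
      ((Ideal.finite_minimalPrimes_of_isNoetherianRing R _).subset Set.sdiff_subset)
      fun q hq => ⟨hq.1.1.1, hq.2⟩
    have hyp : y ∉ p.asIdeal := fun h => by
      have h1 : y ∈ ⋃ q ∈ associatedPrimes R M', (q : Set R) := Set.mem_biUnion hp' h
      rw [biUnion_associatedPrimes_eq_compl_regular] at h1
      exact h1 hy
    by_cases hq : ∃ q ∈ (p.asIdeal ⊔ Ideal.span {y}).minimalPrimes, q ≠ maximalIdeal R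
    · obtain ⟨q, hq, hqm⟩ := hq
      have hqp : q.IsPrime := hq.1.1
      have hpq : p.asIdeal < q := lt_of_le_of_ne (le_sup_left.trans hq.1.2) fun e =>
        hyp (e ▸ hq.1.2 (Ideal.mem_sup_right (Ideal.mem_span_singleton_self y)))
      have hxq : t * x ∉ q := by
        intro hxq
        obtain ⟨q', hq', hle'⟩ := Ideal.exists_minimalPrimes_le (J := q)
          (sup_le hpq.le ((Ideal.span_singleton_le_iff_mem _).2 hxq))
        have hq'p : q'.IsPrime := hq'.1.1
        have hpq' : p.asIdeal < q' := lt_of_le_of_ne (le_sup_left.trans hq'.1.2) fun e =>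
          hxp' (e ▸ hq'.1.2 (Ideal.mem_sup_right (Ideal.mem_span_singleton_self _)))
        have e : q' = q := hle'.eq_of_not_lt (Ideal.not_lt_of_mem_minimalPrimes_sup_span hq hpq')
        subst e
        exact hyS q' ⟨hq', hqm⟩ (hq.1.2 (Ideal.mem_sup_right (Ideal.mem_span_singleton_self y)))
      have hdim : Order.coheight (⟨q, hqp⟩ : PrimeSpectrum R) ≤ k := by
        have : Order.coheight (⟨q, hqp⟩ : PrimeSpectrum R) + 1 ≤ k + 1 :=
          (Order.coheight_add_one_le (show p < ⟨q, hqp⟩ from hpq)).trans (by simpa using hk)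
        exact (ENat.add_le_add_iff_right (by simp)).1 this
      have := ih (M := QuotSMulTop y M') ⟨q, hqp⟩ (associatedPrimes_quotSMulTop hp' hy hq) hqm hdim
        (x := (t * x) * (t * x)) fun i hi z => by
          rw [mul_smul]
          refine smul_smul_eq_zero_of_exact (maximalIdeal R)
            (f := LinearMap.lsmul R M' y) (g := Submodule.mkQ _) hy
            (Submodule.mkQ_surjective _) ?_ (hx' i (by omega)) (hx' (i + 1) (by omega)) z
          rw [LinearMap.exact_iff, Submodule.ker_mkQ]
          ext w
          simp [Submodule.mem_smul_pointwise_iff_exists]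
      exact hxq ((hqp.mem_or_mem this).elim id id)
    · push Not at hq
      refine hxp' (mem_of_radical_sup_span hp' hy hym ?_ (hx' 0 (by omega)) (hx' 1 (by omega)))
      rw [← Ideal.sInf_minimalPrimes]
      exact le_sInf fun q hq' => (hq q hq').ge

end localCohomology

lemma IsFiniteLength.exists_maximalIdeal_pow_smul_eq_zero {R : Type*} [CommRing R] [IsLocalRing R]
    {M : Type*} [AddCommGroup M] [Module R M] (h : IsFiniteLength R M) :
    ∃ n : ℕ, ∀ r ∈ maximalIdeal R ^ n, ∀ z : M, r • z = 0 := by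
  induction h with
  | of_subsingleton => exact ⟨0, fun _ _ _ => Subsingleton.elim _ _⟩
  | @of_simple_quotient M _ _ N hs _ ih =>
    obtain ⟨n, hn⟩ := ih
    refine ⟨n + 1, fun r hr z => ?_⟩
    have hmax : Module.annihilator R (M ⧸ N) = maximalIdeal R :=
      eq_maximalIdeal (IsSimpleModule.annihilator_isMaximal (R := R) (M := M ⧸ N))
    rw [pow_succ] at hr
    induction hr using Submodule.mul_induction_on' with
    | mem_mul_mem a ha b hb =>
      rw [← hmax, Module.mem_annihilator] at hb
      have hbz : b • z ∈ N := (Submodule.Quotient.mk_eq_zero _).1 (hb (Submodule.Quotient.mk z))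
      rw [mul_smul]
      exact congr_arg Subtype.val (hn a ha ⟨b • z, hbz⟩)
    | add a _ b _ ha hb => rw [add_smul, ha, hb, add_zero]

lemma PrimeSpectrum.coheight_le_ringKrullDim_quotient {R : Type*} [CommRing R] (I : Ideal R)
    (p : PrimeSpectrum R) (h : I ≤ p.asIdeal) :
    (Order.coheight p : WithBot ℕ∞) ≤ ringKrullDim (R ⧸ I) := by
  rw [Order.coheight_eq_krullDim_Ici, ringKrullDim_quotient]
  exact Order.krullDim_le_of_strictMono
    (fun q : Set.Ici p => (⟨q.1, h.trans q.2⟩ : PrimeSpectrum.zeroLocus (R := R) I))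
    fun _ _ hab => hab

namespace localCohomology
variable {R : Type} [CommRing R]

lemma isPowTorsion_of_forall_associatedPrimes_eq [IsNoetherianRing R] {J : Ideal R} {M : Type}
    [AddCommGroup M] [Module R M] (h : ∀ p ∈ associatedPrimes R M, p = J) : IsPowTorsion J M := by
  intro z
  have hle : J ≤ (Module.annihilator R (Submodule.span R {z})).radical := by
    rw [← Ideal.sInf_minimalPrimes]
    refine le_sInf fun p hp => (h p ?_).ge
    exact associatedPrimes.subset_of_injective (Submodule.subtype_injective _)
      (Module.associatedPrimes.minimalPrimes_annihilator_subset_associatedPrimes R _ hp)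
  obtain ⟨n, hn⟩ := Ideal.exists_pow_le_of_le_radical_of_fg hle (IsNoetherian.noetherian _)
  exact ⟨n, fun r hr => congr_arg Subtype.val
    (Module.mem_annihilator.1 (hn hr) ⟨z, Submodule.mem_span_singleton_self z⟩)⟩

/-- In a generalized Cohen-Macaulay local ring, the annihilator of a parameter is torsion. -/
lemma isPowTorsion_ker_lsmul [IsNoetherianRing R] [IsLocalRing R] {k : ℕ} {g : R}
    (hfin : ∀ i ≤ k, IsFiniteLength R (ofModule (maximalIdeal R) i R))
    (hg : ringKrullDim (R ⧸ Ideal.span {g}) ≤ k) :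
    IsPowTorsion (maximalIdeal R) (LinearMap.ker (LinearMap.lsmul R R g)) := by
  choose! N hN using fun i hi => (hfin i hi).exists_maximalIdeal_pow_smul_eq_zero
  refine isPowTorsion_of_forall_associatedPrimes_eq fun p hp => ?_
  by_contra hpm
  have hpR := associatedPrimes.subset_of_injective (Submodule.subtype_injective _) hp
  obtain ⟨hpp, z, hz⟩ := isAssociatedPrime_iff.1 hp
  have hgp : g ∈ p := by
    rw [hz, Submodule.mem_colon_singleton, Submodule.mem_bot]
    exact Subtype.ext z.2
  have hk : Order.coheight (⟨p, hpp⟩ : PrimeSpectrum R) ≤ k := by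
    have := (PrimeSpectrum.coheight_le_ringKrullDim_quotient (Ideal.span {g}) ⟨p, hpp⟩
      ((Ideal.span_singleton_le_iff_mem _).2 hgp)).trans hg
    exact_mod_cast this
  have hle : maximalIdeal R ^ (Finset.range (k + 1)).sup N ≤ p := fun r hr =>
    mem_of_coheight_le k ⟨p, hpp⟩ hpR hpm hk fun i hi =>
      hN i hi r (Ideal.pow_le_pow_right (Finset.le_sup (Finset.mem_range.2 (by omega))) hr)
  exact hpm (le_antisymm (le_maximalIdeal hpp.ne_top) (hpp.le_of_pow_le hle))

/-- The length of `Hⁱ_J(R ⧸ (g))` in terms of multiplication by `g` on `Hⁱ_J(R)` and `Hⁱ⁺¹_J(R)`,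
when the annihilator of `g` is `J`-power torsion. -/
lemma length_quotient_span_singleton [IsNoetherianRing R] {J : Ideal R} {g : R}
    (hg : IsPowTorsion J (LinearMap.ker (LinearMap.lsmul R R g))) (i : ℕ) :
    Module.length R (ofModule J i (R ⧸ Ideal.span {g})) =
      Module.length R (ofModule J i R ⧸ LinearMap.range (LinearMap.lsmul R (ofModule J i R) g)) +
      Module.length R (LinearMap.ker (LinearMap.lsmul R (ofModule J (i + 1) R) g)) := by
  set K := LinearMap.ker (LinearMap.lsmul R R g) with hK
  let α : (R ⧸ K) →ₗ[R] R := K.liftQ (LinearMap.lsmul R R g) le_rfl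
  have hα : Function.Injective α := LinearMap.ker_eq_bot.1 (Submodule.ker_liftQ_eq_bot _ _ _ le_rfl)
  have hexact : Function.Exact α (Ideal.span {g} : Submodule R R).mkQ := by
    rw [LinearMap.exact_iff, Submodule.ker_mkQ, Submodule.range_liftQ]
    ext x
    simp [Ideal.mem_span_singleton', mul_comm]
  have hcomp : α ∘ₗ K.mkQ = g • LinearMap.id := by ext; simp [α]
  have hsmul (j : ℕ) (x : ofModule J j R) : lmap J j α (lmap J j K.mkQ x) = g • x := by
    rw [← lmap_comp, hcomp, lmap_smul_id]
  obtain ⟨δ, h1, h2⟩ := exists_connecting J hα (Submodule.mkQ_surjective _) hexact i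
  have h0 := exact_lmap J hα (Submodule.mkQ_surjective _) hexact i
  have hrange : LinearMap.range (LinearMap.lsmul R (ofModule J i R) g) =
      LinearMap.ker (lmap J i (Ideal.span {g} : Submodule R R).mkQ) := by
    rw [h0.linearMap_ker_eq]
    ext y
    constructor
    · rintro ⟨x, rfl⟩
      exact ⟨_, hsmul i x⟩
    · rintro ⟨w, rfl⟩
      obtain ⟨x, rfl⟩ := lmap_mkQ_surjective J hg i w
      exact ⟨x, (hsmul i x).symm⟩
  have hker : Module.length R (LinearMap.ker (LinearMap.lsmul R (ofModule J (i + 1) R) g)) =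
      Module.length R (LinearMap.range δ) := by
    rw [← h2.linearMap_ker_eq]
    let φ : LinearMap.ker (LinearMap.lsmul R (ofModule J (i + 1) R) g) →ₗ[R]
        LinearMap.ker (lmap J (i + 1) α) :=
      LinearMap.restrict (lmap J (i + 1) K.mkQ) fun x hx => by
        rw [LinearMap.mem_ker, hsmul]
        exact hx
    refine (LinearEquiv.ofBijective φ ⟨fun x y hxy => Subtype.ext
      (lmap_mkQ_injective J hg i (congr_arg Subtype.val hxy)), fun ⟨w, hw⟩ => ?_⟩).length_eq
    obtain ⟨x, rfl⟩ := lmap_mkQ_surjective J hg (i + 1) w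
    rw [LinearMap.mem_ker, hsmul] at hw
    exact ⟨⟨x, hw⟩, rfl⟩
  rw [hker, hrange, ((lmap J i (Ideal.span {g} : Submodule R R).mkQ).quotKerEquivRange).length_eq,
    ← h1.linearMap_ker_eq]
  exact Module.length_eq_add_of_exact (LinearMap.ker δ).subtype δ.rangeRestrict
    (Submodule.subtype_injective _) δ.surjective_rangeRestrict (by
      rw [LinearMap.exact_iff, LinearMap.ker_rangeRestrict, Submodule.range_subtype])

end localCohomology

end

theorem statement4 (R : Type) [CommRing R] [IsNoetherianRing R] [IsLocalRing R]
    (d : ℕ) (hd : 1 ≤ d) (hdim : ringKrullDim R = d)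
    (hgcm : ∀ i < d, ∃ n : ℕ, lcLen R (maximalIdeal R) i R = n)
    (f : R) (hf : ringKrullDim (R ⧸ Ideal.span {f}) = ((d - 1 : ℕ) : WithBot ℕ∞))
    (ε : R) (hε : ε ∈ maximalIdeal R)
    (hann : ∀ i < d, ∀ y : ((localCohomology (maximalIdeal R) i).obj (ModuleCat.of R R)),
      ε • y = 0)
    (hfε : ringKrullDim (R ⧸ Ideal.span {f + ε}) = ((d - 1 : ℕ) : WithBot ℕ∞)) :
    ∀ i < d - 1, lcLen R (maximalIdeal R) i (R ⧸ Ideal.span {f}) =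
      lcLen R (maximalIdeal R) i (R ⧸ Ideal.span {f + ε}) := by
  intro i hi
  have hfin : ∀ j ≤ d - 1,
      IsFiniteLength R (localCohomology.ofModule (maximalIdeal R) j R) := fun j hj => by
    obtain ⟨n, hn⟩ := hgcm j (by omega)
    rw [lcLen, modLen, ← Module.coe_length] at hn
    rw [← Module.length_ne_top_iff]
    intro h
    rw [h] at hn
    exact ENat.top_ne_natCast n (by exact_mod_cast hn)
  have hsmul : ∀ j < d, LinearMap.lsmul R (localCohomology.ofModule (maximalIdeal R) j R) (f + ε) =
      LinearMap.lsmul R (localCohomology.ofModule (maximalIdeal R) j R) f := fun j hj => by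
    ext y
    rw [LinearMap.lsmul_apply, LinearMap.lsmul_apply, add_smul, hann j hj, add_zero]
  have hlen := localCohomology.length_quotient_span_singleton
    (localCohomology.isPowTorsion_ker_lsmul hfin hf.le) i
  rw [← hsmul i (by omega), ← hsmul (i + 1) (by omega),
    ← localCohomology.length_quotient_span_singleton
      (localCohomology.isPowTorsion_ker_lsmul hfin hfε.le) i] at hlen
  rw [lcLen, lcLen, modLen, modLen, ← Module.coe_length, ← Module.coe_length]
  exact congr_arg _ hlen
end

section
/- Let (R, m) be a Cohen-Macaulay local ring of dimension d and I = (f_1,...,f_r) generated by a part of a system of parameters. Set N = (d−r)! · e(R/I) + 1. Then for all ε_1,...,ε_r ∈ m^N, the Hilbert functions of R/I and R/(f_1+ε_1,...,f_r+ε_r) are equal. -/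
open IsLocalRing Filter

/-- A family of ring elements such that every member is a nonzerodivisor modulo any set of the
other members, i.e. a family which is a weakly regular sequence in every order. -/
def RegularFamily {R ι : Type*} [CommRing R] (y : ι → R) : Prop :=
  ∀ (T : Set ι) (i : ι), i ∉ T → ∀ u, y i * u ∈ Ideal.span (y '' T) → u ∈ Ideal.span (y '' T)

namespace Ideal

variable {R : Type*} [CommRing R]

lemma sup_span_singleton_pow_succ_le (J : Ideal R) (a : R) (n : ℕ) :
    (J ⊔ span {a}) ^ (n + 1) ≤ J ^ (n + 1) ⊔ span {a} * (J ⊔ span {a}) ^ n := by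
  induction n with
  | zero => simp
  | succ n ih =>
    have h : J * (J ⊔ span {a}) ^ (n + 1) ≤
        J ^ (n + 1 + 1) ⊔ span {a} * (J ⊔ span {a}) ^ (n + 1) := by
      refine (mul_mono_right ih).trans ?_
      rw [Ideal.mul_sup]
      refine sup_le_sup (pow_succ' J (n + 1)).ge ?_
      rw [mul_left_comm, pow_succ' _ n]
      exact mul_mono_right (mul_mono_left le_sup_left)
    rw [pow_succ' (J ⊔ span {a}) (n + 1), sup_mul]
    exact sup_le h le_sup_right

/-- The length of the quotient by an ideal. -/
noncomputable def colength (K : Ideal R) : ℕ∞ := Module.length R (R ⧸ K)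

/-- The length of `R ⧸ K` splits along multiplication by `a`. -/
lemma length_quotient_eq_add_of_colon (K L : Ideal R) (a : R) (h : ∀ u, a * u ∈ K ↔ u ∈ L) :
    colength K =
      colength L + colength (K ⊔ span {a}) := by
  have hL : L ≤ Submodule.comap (LinearMap.mulLeft R a) K := fun u hu => (h u).2 hu
  unfold colength
  refine Module.length_eq_add_of_exact (Submodule.mapQ L K (LinearMap.mulLeft R a) hL)
    (Submodule.mapQ K (K ⊔ span {a}) LinearMap.id le_sup_left) ?_ ?_ ?_
  · rw [← LinearMap.ker_eq_bot, eq_bot_iff]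
    intro x hx
    obtain ⟨x, rfl⟩ := Submodule.Quotient.mk_surjective _ x
    exact (Submodule.Quotient.mk_eq_zero _).2
      ((h x).1 ((Submodule.Quotient.mk_eq_zero K (x := a * x)).1 hx))
  · intro x
    obtain ⟨x, rfl⟩ := Submodule.Quotient.mk_surjective _ x
    exact ⟨Submodule.Quotient.mk x, rfl⟩
  · intro x
    obtain ⟨x, rfl⟩ := Submodule.Quotient.mk_surjective _ x
    simp only [Submodule.mapQ_apply, LinearMap.id_apply, Set.mem_range]
    rw [Submodule.Quotient.mk_eq_zero, Submodule.mem_sup]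
    constructor
    · rintro ⟨k, hk, z, hz, rfl⟩
      obtain ⟨b, rfl⟩ := mem_span_singleton'.1 hz
      refine ⟨Submodule.Quotient.mk b, ?_⟩
      rw [Submodule.mapQ_apply, Submodule.Quotient.eq, LinearMap.mulLeft_apply]
      have : a * b - (k + b * a) = -k := by ring
      rw [this]
      exact neg_mem hk
    · rintro ⟨b, hb⟩
      obtain ⟨b, rfl⟩ := Submodule.Quotient.mk_surjective _ b
      rw [Submodule.mapQ_apply, Submodule.Quotient.eq, LinearMap.mulLeft_apply] at hb
      exact ⟨x - b * a, by convert neg_mem hb using 1; ring, b * a,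
        mem_span_singleton'.2 ⟨b, rfl⟩, by ring⟩

/-- The length of `L ⧸ K` for ideals `K ≤ L`. -/
lemma length_quotient_eq_add (K L : Ideal R) (h : K ≤ L) :
    colength K =
      Module.length R (L ⧸ K.submoduleOf L) + colength L := by
  unfold colength
  refine Module.length_eq_add_of_exact
    (Submodule.mapQ (K.submoduleOf L) K L.subtype le_rfl)
    (Submodule.mapQ K L LinearMap.id h) ?_ ?_ ?_
  · rw [← LinearMap.ker_eq_bot, eq_bot_iff]
    intro x hx
    obtain ⟨x, rfl⟩ := Submodule.Quotient.mk_surjective _ x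
    exact (Submodule.Quotient.mk_eq_zero _).2
      ((Submodule.Quotient.mk_eq_zero K (x := (x : R))).1 hx)
  · intro x
    obtain ⟨x, rfl⟩ := Submodule.Quotient.mk_surjective _ x
    exact ⟨Submodule.Quotient.mk x, rfl⟩
  · intro x
    obtain ⟨x, rfl⟩ := Submodule.Quotient.mk_surjective _ x
    simp only [Submodule.mapQ_apply, LinearMap.id_apply, Set.mem_range]
    rw [Submodule.Quotient.mk_eq_zero]
    constructor
    · intro hx
      exact ⟨Submodule.Quotient.mk ⟨x, hx⟩, rfl⟩
    · rintro ⟨b, hb⟩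
      obtain ⟨b, rfl⟩ := Submodule.Quotient.mk_surjective _ b
      have hb' : (b : R) - x ∈ K := (Submodule.Quotient.eq K).1 hb
      simpa using sub_mem b.2 (h hb')

/-- If `X ⊓ I = X * I`, the length of `R ⧸ (I ⊔ X * a)` depends on `I` only through `I ⊔ a`
and the length of `R ⧸ (I ⊔ X)`. -/
lemma length_quotient_sup_mul (I X a : Ideal R) (h : X ⊓ I ≤ X * I) :
    colength (I ⊔ X * a) =
      Module.length R (X ⧸ (X * (a ⊔ I)).submoduleOf X) + colength (I ⊔ X) := by
  rw [length_quotient_eq_add (I ⊔ X * a) (I ⊔ X) (sup_le_sup_left mul_le_left _)]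
  congr 1
  have e1 : X ⊓ (I ⊔ X * a) = X * (a ⊔ I) := by
    rw [mul_sup, sup_comm (X * a)]
    apply le_antisymm
    · rw [inf_comm, sup_comm, sup_inf_assoc_of_le I (mul_le_left : X * a ≤ X), sup_comm,
        inf_comm]
      exact sup_le_sup_right h _
    · exact le_inf (sup_le mul_le_left mul_le_left) (sup_le_sup_right mul_le_right _)
  have e2 : X ⊔ (I ⊔ X * a) = I ⊔ X := by
    rw [sup_left_comm, sup_eq_left.2 (mul_le_left : X * a ≤ X)]
  have e := (LinearMap.quotientInfEquivSupQuotient X (I ⊔ X * a)).length_eq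
  rw [← Submodule.comap_inf, e1, e2] at e
  exact e.symm

end Ideal

namespace RegularFamily

open Ideal

variable {R ι : Type*} [CommRing R] {y : ι → R}

lemma mem_of_mul_mem_sup_pow_succ {T₀ : Set ι} {J : Ideal R} {s : ι}
    (h : ∀ n u, y s * u ∈ span (y '' T₀) ⊔ J ^ n → u ∈ span (y '' T₀) ⊔ J ^ n)
    (n : ℕ) (u : R) (hu : y s * u ∈ span (y '' T₀) ⊔ (J ⊔ span {y s}) ^ (n + 1)) :
    u ∈ span (y '' T₀) ⊔ (J ⊔ span {y s}) ^ n := by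
  have hu' := sup_le_sup_left (sup_span_singleton_pow_succ_le J (y s) n) _ hu
  rw [← sup_assoc] at hu'
  obtain ⟨w, hw, z, hz, e⟩ := Submodule.mem_sup.1 hu'
  obtain ⟨v, hv, rfl⟩ := mem_span_singleton_mul.1 hz
  have h1 := h (n + 1) (u - v) (by rw [mul_sub, ← e, add_sub_cancel_right]; exact hw)
  have h2 : span (y '' T₀) ⊔ J ^ (n + 1) ≤ span (y '' T₀) ⊔ (J ⊔ span {y s}) ^ n :=
    sup_le_sup_left ((pow_le_pow_right n.le_succ).trans (pow_right_mono le_sup_left n)) _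
  simpa using add_mem (h2 h1) (mem_sup_right hv)

lemma span_image_insert (T : Set ι) (s : ι) :
    span (y '' insert s T) = span (y '' T) ⊔ span {y s} := by
  rw [Set.image_insert_eq, span_insert, sup_comm]

theorem mem_of_mul_mem_sup_pow [DecidableEq ι] (hy : RegularFamily y) (T : Finset ι) :
    ∀ (T₀ : Set ι) (i : ι), i ∉ T → i ∉ T₀ → (∀ t ∈ T, t ∉ T₀) →
      ∀ n u, y i * u ∈ span (y '' T₀) ⊔ span (y '' T) ^ n →
        u ∈ span (y '' T₀) ⊔ span (y '' T) ^ n := by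
  induction T using Finset.induction_on with
  | empty =>
    intro T₀ i _ hi _ n u hu
    rcases n with _ | n
    · simp
    · rw [Finset.coe_empty, Set.image_empty, span_empty, Ideal.bot_pow n.succ_ne_zero,
        sup_bot_eq] at hu ⊢
      exact hy T₀ i hi u hu
  | insert s T hs ih =>
    intro T₀ i hi hi₀ hT n
    simp only [Finset.mem_insert, not_or] at hi
    have hsT₀ : s ∉ T₀ := hT s (Finset.mem_insert_self s T)
    have hT' : ∀ t ∈ T, t ∉ T₀ := fun t ht => hT t (Finset.mem_insert_of_mem ht)
    have hB := mem_of_mul_mem_sup_pow_succ (ih T₀ s hs hsT₀ hT')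
    rw [Finset.coe_insert, span_image_insert]
    induction n with
    | zero => simp
    | succ n ihn =>
      intro u hu
      have key : ∀ k, span (y '' insert s T₀) ⊔ span (y '' T) ^ k =
          span (y '' T₀) ⊔ span {y s} ⊔ span (y '' T) ^ k := fun k => by rw [span_image_insert]
      have h1 := ih (insert s T₀) i hi.2 (by simp [hi.1, hi₀])
        (fun t ht => by
          simp only [Set.mem_insert_iff, not_or]
          exact ⟨fun h => hs (h ▸ ht), hT' t ht⟩) (n + 1) u (by
          rw [key]
          refine (sup_le (le_sup_left.trans le_sup_left)
            ((sup_span_singleton_pow_succ_le _ _ n).trans (sup_le le_sup_right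
              (mul_le_left.trans (le_sup_right.trans le_sup_left))))) hu)
      rw [key, sup_right_comm] at h1
      obtain ⟨v, hv, z, hz, rfl⟩ := Submodule.mem_sup.1 h1
      obtain ⟨w, rfl⟩ := mem_span_singleton'.1 hz
      have hle : span (y '' T₀) ⊔ span (y '' T) ^ (n + 1) ≤
          span (y '' T₀) ⊔ (span (y '' T) ⊔ span {y s}) ^ (n + 1) :=
        sup_le_sup_left (pow_right_mono le_sup_left _) _
      refine add_mem (hle hv) ?_
      have h2 : y s * (y i * w) ∈
          span (y '' T₀) ⊔ (span (y '' T) ⊔ span {y s}) ^ (n + 1) := by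
        have := sub_mem hu (Ideal.mul_mem_left _ (y i) (hle hv))
        convert this using 1
        ring
      have h3 := ihn w (hB n _ h2)
      obtain ⟨a, ha, b, hb, rfl⟩ := Submodule.mem_sup.1 h3
      rw [add_mul]
      refine add_mem (mem_sup_left (Ideal.mul_mem_right _ _ ha)) (mem_sup_right ?_)
      rw [pow_succ]
      exact mul_mem_mul hb (mem_sup_right (mem_span_singleton_self _))

theorem pow_inf_le_mul [DecidableEq ι] (hy : RegularFamily y) (T T₀ : Finset ι)
    (hT : Disjoint T T₀) (n : ℕ) :
    span (y '' T) ^ n ⊓ span (y '' T₀) ≤ span (y '' T) ^ n * span (y '' T₀) := by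
  induction T₀ using Finset.induction_on with
  | empty => simp
  | insert z T₀ hz ih =>
    rw [Finset.disjoint_insert_right] at hT
    rw [Finset.coe_insert, span_image_insert]
    rintro u ⟨hu, hu'⟩
    obtain ⟨a, ha, b, hb, rfl⟩ := Submodule.mem_sup.1 hu'
    obtain ⟨v, rfl⟩ := mem_span_singleton'.1 hb
    have h1 := hy.mem_of_mul_mem_sup_pow T T₀ z hT.1 (by simpa using hz)
      (fun t ht => by simpa using Finset.disjoint_left.1 hT.2 ht) n v (by
        have := sub_mem (mem_sup_right (S := span (y '' (T₀ : Set ι))) hu) (mem_sup_left ha)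
        convert this using 1
        ring)
    obtain ⟨i, hi, j, hj, rfl⟩ := Submodule.mem_sup.1 h1
    have h2 : a + i * y z ∈ span (y '' (T : Set ι)) ^ n * span (y '' (T₀ : Set ι)) := by
      refine ih hT.2 ⟨?_, add_mem ha (Ideal.mul_mem_right _ _ hi)⟩
      have := sub_mem (SetLike.mem_coe.1 hu) (Ideal.mul_mem_right (y z) _ hj)
      rw [SetLike.mem_coe]
      convert this using 1
      ring
    have h3 : j * y z ∈ span (y '' (T : Set ι)) ^ n * span {y z} :=
      mul_mem_mul hj (mem_span_singleton_self _)
    rw [Ideal.mul_sup]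
    convert add_mem (mem_sup_left h2) (mem_sup_right h3) using 1
    ring

theorem length_quotient_sup_pow [DecidableEq ι] (hy : RegularFamily y) (T : Finset ι) :
    ∀ (T₀ : Set ι), (∀ t ∈ T, t ∉ T₀) → ∀ n,
      colength (span (y '' T₀) ⊔ span (y '' T) ^ (n + 1)) =
        ((n + T.card).choose T.card : ℕ) *
          colength (span (y '' T₀) ⊔ span (y '' T)) := by
  induction T using Finset.induction_on with
  | empty =>
    intro T₀ _ n
    rw [Finset.coe_empty, Set.image_empty, span_empty, Ideal.bot_pow n.succ_ne_zero]
    simp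
  | insert s T hs ih =>
    intro T₀ hT n
    have hsT₀ : s ∉ T₀ := hT s (Finset.mem_insert_self s T)
    have hT' : ∀ t ∈ T, t ∉ T₀ := fun t ht => hT t (Finset.mem_insert_of_mem ht)
    have hB := mem_of_mul_mem_sup_pow_succ (hy.mem_of_mul_mem_sup_pow T T₀ s hs hsT₀ hT')
    rw [Finset.coe_insert, span_image_insert, Finset.card_insert_of_notMem hs]
    induction n with
    | zero => rw [pow_one]; simp
    | succ n ihn =>
      rw [length_quotient_eq_add_of_colon _
        (span (y '' T₀) ⊔ (span (y '' T) ⊔ span {y s}) ^ (n + 1)) (y s), ihn]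
      · have e1 : span (y '' T₀) ⊔ (span (y '' T) ⊔ span {y s}) ^ (n + 1 + 1) ⊔ span {y s} =
            span (y '' insert s T₀) ⊔ span (y '' T) ^ (n + 1 + 1) := by
          rw [span_image_insert]
          apply le_antisymm
          · refine sup_le (sup_le (le_sup_left.trans le_sup_left) ?_)
              (le_sup_right.trans le_sup_left)
            exact (sup_span_singleton_pow_succ_le _ _ _).trans (sup_le le_sup_right
              (mul_le_left.trans (le_sup_right.trans le_sup_left)))
          · exact sup_le (sup_le (le_sup_left.trans le_sup_left) le_sup_right)
              ((pow_right_mono le_sup_left _).trans (le_sup_right.trans le_sup_left))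
        have e2 : span (y '' insert s T₀) ⊔ span (y '' T) =
            span (y '' T₀) ⊔ (span (y '' T) ⊔ span {y s}) := by
          rw [span_image_insert, sup_right_comm, sup_assoc]
        rw [e1, ih (insert s T₀) (fun t ht => by
          simp only [Set.mem_insert_iff, not_or]
          exact ⟨fun h => hs (h ▸ ht), hT' t ht⟩) (n + 1), e2, ← add_mul]
        congr 1
        have := Nat.choose_succ_succ (n + (T.card + 1)) T.card
        rw [show n + 1 + (T.card + 1) = (n + (T.card + 1)).succ by omega, this,
          show n + 1 + T.card = n + (T.card + 1) by omega]
        push_cast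
        ring
      · intro u
        refine ⟨hB (n + 1) u, fun hu => ?_⟩
        obtain ⟨a, ha, b, hb, rfl⟩ := Submodule.mem_sup.1 hu
        rw [mul_add]
        refine add_mem (mem_sup_left (Ideal.mul_mem_left _ _ ha)) (mem_sup_right ?_)
        rw [pow_succ']
        exact mul_mem_mul (mem_sup_right (mem_span_singleton_self _)) hb

end RegularFamily

section ExtVanishing

open CategoryTheory Abelian Pointwise

universe u

variable {R : Type u} [CommRing R] [IsLocalRing R]

variable (R) in
/-- The modules `M` with `Ext^i(k, M) = 0` for all `i < n`, where `k` is the residue field. -/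
def ExtVanishing (n : ℕ) (M : Type u) [AddCommGroup M] [Module R M] : Prop :=
  ∀ i < n, Subsingleton
    (Ext (ModuleCat.of R (R ⧸ maximalIdeal R)) (ModuleCat.of R M) i)

namespace ExtVanishing

variable {M N : Type u} [AddCommGroup M] [Module R M] [AddCommGroup N] [Module R N] {n : ℕ}

lemma quotSMulTop (h : ExtVanishing R (n + 1) M) {z : R} (hz : IsSMulRegular M z) :
    ExtVanishing R n (QuotSMulTop z M) := by
  intro i hi
  have zero1 := AddCommGrpCat.isZero_of_iff_subsingleton.mpr (h i (by omega))
  have zero2 := AddCommGrpCat.isZero_of_iff_subsingleton.mpr (h (i + 1) (by omega))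
  have hz' : IsSMulRegular (ModuleCat.of R M) z := hz
  exact AddCommGrpCat.subsingleton_of_isZero <| ShortComplex.Exact.isZero_of_both_zeros
    ((Ext.covariant_sequence_exact₃' _ hz'.smulShortComplex_shortExact) i (i + 1) rfl)
    (zero1.eq_zero_of_src _) (zero2.eq_zero_of_tgt _)

lemma of_linearEquiv (h : ExtVanishing R n M) (e : M ≃ₗ[R] N) : ExtVanishing R n N := by
  intro i hi
  have : Subsingleton ((extFunctorObj (ModuleCat.of R (R ⧸ maximalIdeal R)) i).obj
    (ModuleCat.of R M)) := h i hi
  exact (((extFunctorObj (ModuleCat.of R (R ⧸ maximalIdeal R)) i).mapIso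
    e.toModuleIso).addCommGroupIsoToAddEquiv.symm).toEquiv.subsingleton

lemma of_surjective (h : ExtVanishing R (n + 1) M) {z : R} (hz : IsSMulRegular M z)
    (g : M →ₗ[R] N) (hg : Function.Surjective g) (hker : LinearMap.ker g = z • ⊤) :
    ExtVanishing R n N :=
  (h.quotSMulTop hz).of_linearEquiv
    ((Submodule.quotEquivOfEq _ _ hker.symm).trans (g.quotKerEquivOfSurjective hg))

lemma exists_isSMulRegular [IsNoetherianRing R] [Module.Finite R M]
    (h : ExtVanishing R (n + 1) M) : ∃ z ∈ maximalIdeal R, IsSMulRegular M z := by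
  have h0 := h 0 n.succ_pos
  have : Subsingleton ((R ⧸ maximalIdeal R) →ₗ[R] M) :=
    (Ext.addEquiv₀.trans (ModuleCat.homAddEquiv (M := ModuleCat.of R (R ⧸ maximalIdeal R))
      (N := ModuleCat.of R M))).symm.subsingleton
  simpa [Ideal.annihilator_quotient] using IsSMulRegular.subsingleton_linearMap_iff.1 this

theorem of_isRegular [IsNoetherianRing R] (rs : List R) (mem : ∀ r ∈ rs, r ∈ maximalIdeal R)
    (reg : RingTheory.Sequence.IsWeaklyRegular R rs) : ExtVanishing R rs.length R := by
  have hlt : maximalIdeal R • (⊤ : Submodule R R) < ⊤ := by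
    rw [smul_eq_mul, Ideal.mul_top, lt_top_iff_ne_top]
    exact Ideal.IsPrime.ne_top'
  refine ModuleCat.subsingleton_ext_of_exists_isRegular (maximalIdeal R) _ ?_
    (ModuleCat.of R R) hlt rs mem ⟨reg, ?_⟩
  · rw [Module.support_eq_zeroLocus, Ideal.annihilator_quotient]
  · intro h
    refine hlt.not_ge (h.le.trans (Submodule.smul_mono_left ?_))
    exact Ideal.span_le.2 mem

/-- Associated primes of a module with vanishing `Ext` have large dimension. -/
theorem le_ringKrullDim_quotient [IsNoetherianRing R] [Module.Finite R M]
    (h : ExtVanishing R n M) (p : Ideal R) (hp : IsAssociatedPrime p M) :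
    (n : WithBot ℕ∞) ≤ ringKrullDim (R ⧸ p) := by
  induction n generalizing M p with
  | zero =>
    have := hp.isPrime
    exact ringKrullDim_nonneg_of_nontrivial
  | succ n ih =>
    obtain ⟨z, hzm, hz⟩ := h.exists_isSMulRegular
    have hprime := hp.isPrime
    obtain ⟨x, hx⟩ := (isAssociatedPrime_iff.1 hp).2
    have hann : ∀ {a : R}, a ∈ p ↔ a • x = 0 := by
      intro a
      rw [hx, Submodule.mem_colon_singleton, Submodule.mem_bot]
    have hx0 : x ≠ 0 := by
      rintro rfl
      exact hprime.ne_top ((Ideal.eq_top_iff_one p).2 (hann.2 (smul_zero _)))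
    have hzp : z ∉ p := fun hzp => hx0 (hz ((hann.1 hzp).trans (smul_zero z).symm))
    obtain ⟨u, hu, huz⟩ : ∃ u : M, (∀ a ∈ p, a • u = 0) ∧ ∀ v, u ≠ z • v := by
      by_contra! hcon
      let K : Submodule R M :=
        { carrier := {u | ∀ a ∈ p, a • u = 0}
          add_mem' := fun {u v} hu hv a ha => by rw [smul_add, hu a ha, hv a ha, add_zero]
          zero_mem' := fun a _ => smul_zero a
          smul_mem' := fun c u hu a ha => by rw [smul_comm, hu a ha, smul_zero] }
      have hK : K = ⊥ := by
        refine Submodule.eq_bot_of_le_smul_of_le_jacobson_bot (maximalIdeal R) K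
          (IsNoetherian.noetherian K) (fun u hu => ?_) (maximalIdeal_le_jacobson _)
        obtain ⟨v, rfl⟩ := hcon u hu
        refine Submodule.smul_mem_smul hzm (fun a ha => ?_)
        refine hz ?_
        change z • a • v = z • 0
        rw [smul_comm, hu a ha, smul_zero]
      have hxK : x ∈ K := fun a ha => hann.1 ha
      rw [hK] at hxK
      exact hx0 hxK
    have hu0 : (Submodule.Quotient.mk u : QuotSMulTop z M) ≠ 0 := by
      intro h0
      obtain ⟨v, -, hv⟩ := (Submodule.Quotient.mk_eq_zero _).1 h0
      exact huz v hv.symm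
    obtain ⟨q, hq, hqu⟩ := exists_le_isAssociatedPrime_of_isNoetherianRing R _ hu0
    have hpq : p ≤ q := fun a ha => hqu (by
      rw [Submodule.mem_colon_singleton, Submodule.mem_bot, ← Submodule.Quotient.mk_smul,
        hu a ha, Submodule.Quotient.mk_zero])
    have hzq : z ∈ q := hqu (by
      rw [Submodule.mem_colon_singleton, Submodule.mem_bot, ← Submodule.Quotient.mk_smul]
      exact (Submodule.Quotient.mk_eq_zero _).2 (Submodule.smul_mem_pointwise_smul _ _ _ trivial))
    have h1 := ih (h.quotSMulTop hz) q hq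
    have hzr : Ideal.Quotient.mk p z ∈ nonZeroDivisors (R ⧸ p) := by
      rw [mem_nonZeroDivisors_iff_ne_zero]
      exact fun h0 => hzp (Ideal.Quotient.eq_zero_iff_mem.1 h0)
    have h2 := ringKrullDim_quotient_succ_le_of_nonZeroDivisor hzr
    have h3 : ringKrullDim (R ⧸ q) ≤
        ringKrullDim ((R ⧸ p) ⧸ Ideal.span {Ideal.Quotient.mk p z}) := by
      refine ringKrullDim_le_of_surjective (Ideal.Quotient.lift _ (Ideal.Quotient.factor hpq) ?_)
        (Ideal.Quotient.lift_surjective_of_surjective _ _ (Ideal.Quotient.factor_surjective hpq))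
      intro a ha
      obtain ⟨b, rfl⟩ := Ideal.mem_span_singleton'.1 ha
      rw [map_mul, Ideal.Quotient.factor_mk, Ideal.Quotient.eq_zero_iff_mem.2 hzq, mul_zero]
    push_cast
    exact (add_le_add_left (h1.trans h3) 1).trans h2

end ExtVanishing

lemma ringKrullDim_quotient_le_ncard [IsNoetherianRing R] (p : Ideal R) [p.IsPrime] (s : Set R)
    (hs : s.Finite) (hsm : s ⊆ maximalIdeal R) (n : ℕ)
    (h : maximalIdeal R ^ n ≤ p ⊔ Ideal.span s) : ringKrullDim (R ⧸ p) ≤ s.ncard := by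
  have : IsLocalRing (R ⧸ p) := .of_surjective' _ Ideal.Quotient.mk_surjective
  have : IsLocalHom (Ideal.Quotient.mk p) := .of_surjective _ Ideal.Quotient.mk_surjective
  have hmax : maximalIdeal (R ⧸ p) ≤ (maximalIdeal R).map (Ideal.Quotient.mk p) := by
    intro x hx
    obtain ⟨x, rfl⟩ := Ideal.Quotient.mk_surjective x
    refine Ideal.mem_map_of_mem _ ((mem_maximalIdeal _).2 fun hu => ?_)
    exact (mem_maximalIdeal _).1 hx (hu.map _)
  rw [← IsLocalRing.maximalIdeal_height_eq_ringKrullDim]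
  have hmin : maximalIdeal (R ⧸ p) ∈
      (Ideal.span (Ideal.Quotient.mk p '' s)).minimalPrimes := by
    refine ⟨⟨inferInstance, Ideal.span_le.2 ?_⟩, fun q hq _ => ?_⟩
    · rintro _ ⟨x, hx, rfl⟩
      have hle : (maximalIdeal R).map (Ideal.Quotient.mk p) ≤ maximalIdeal (R ⧸ p) :=
        ((local_hom_TFAE (Ideal.Quotient.mk p)).out 0 2).1 ‹_›
      exact hle (Ideal.mem_map_of_mem _ (hsm hx))
    · have := hq.1
      refine hmax.trans (Ideal.IsPrime.le_of_pow_le (n := n) ?_)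
      rw [← Ideal.map_pow]
      refine (Ideal.map_mono h).trans ?_
      rw [Ideal.map_sup, Ideal.map_quotient_self, bot_sup_eq, Ideal.map_span]
      exact hq.2
  have h1 := Ideal.height_le_card_of_mem_minimalPrimes_span (hs.image _) hmin
  have h2 : ((Ideal.Quotient.mk p '' s).ncard : ℕ∞) ≤ s.ncard :=
    Nat.cast_le.2 (Set.ncard_image_le hs)
  exact_mod_cast h1.trans h2

theorem ExtVanishing.regularFamily [IsNoetherianRing R] {ι : Type*} [Fintype ι]
    [DecidableEq ι] (h : ExtVanishing R (Fintype.card ι) R) (y : ι → R)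
    (hy : ∀ i, y i ∈ maximalIdeal R) (n : ℕ)
    (hn : maximalIdeal R ^ n ≤ Ideal.span (Set.range y)) : RegularFamily y := by
  have key : ∀ (T : Finset ι) (k : ℕ), T.card + k + 1 = Fintype.card ι →
      ExtVanishing R (k + 1) (R ⧸ Ideal.span (y '' T)) → ∀ i ∉ T,
        IsSMulRegular (R ⧸ Ideal.span (y '' T)) (y i) := by
    intro T k hk hT i hi
    classical
    by_contra hcon
    have hmem : y i ∈ ⋃ p ∈ associatedPrimes R (R ⧸ Ideal.span (y '' T)), (p : Set R) := by
      rw [biUnion_associatedPrimes_eq_compl_regular]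
      exact hcon
    simp only [Set.mem_iUnion] at hmem
    obtain ⟨p, hp, hip⟩ := hmem
    have := hp.isPrime
    have h1 := hT.le_ringKrullDim_quotient p hp
    have hTp : Ideal.span (y '' T) ≤ p := by
      refine le_trans ?_ hp.annihilator_le
      rw [Submodule.annihilator_top, Ideal.annihilator_quotient]
    let s : Finset R := (Finset.univ \ insert i T).image y
    have h2 := ringKrullDim_quotient_le_ncard p (s : Set R) s.finite_toSet (by
      intro x hx
      obtain ⟨j, -, rfl⟩ := Finset.mem_image.1 hx
      exact hy j) n (by
      refine hn.trans (Ideal.span_le.2 ?_)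
      rintro _ ⟨j, rfl⟩
      by_cases hj : j ∈ insert i T
      · refine Ideal.mem_sup_left ?_
        rcases Finset.mem_insert.1 hj with rfl | hj
        · exact hip
        · exact hTp (Ideal.subset_span ⟨j, hj, rfl⟩)
      · exact Ideal.mem_sup_right (Ideal.subset_span (Finset.mem_coe.2 (Finset.mem_image_of_mem _
          (by simpa using hj)))))
    rw [Set.ncard_coe_finset] at h2
    have h3 : s.card ≤ k := by
      refine Finset.card_image_le.trans ?_
      rw [Finset.card_univ_sdiff, Finset.card_insert_of_notMem hi]
      omega
    have h4 := h1.trans h2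
    norm_cast at h4
    omega
  have main : ∀ (T : Finset ι) (k : ℕ), T.card + k = Fintype.card ι →
      ExtVanishing R k (R ⧸ Ideal.span (y '' T)) := by
    intro T
    induction T using Finset.induction_on with
    | empty =>
      intro k hk
      rw [Finset.card_empty, zero_add] at hk
      rw [hk]
      refine h.of_linearEquiv (Submodule.quotEquivOfEqBot _ ?_).symm
      simp
    | insert i T hi ih =>
      intro k hk
      rw [Finset.card_insert_of_notMem hi] at hk
      have hT := ih (k + 1) (by omega)
      have hle : Ideal.span (y '' (T : Set ι)) ≤
          Ideal.span (y '' ((insert i T : Finset ι) : Set ι)) :=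
        Ideal.span_mono (Set.image_mono (Finset.coe_subset.2 (Finset.subset_insert _ _)))
      refine hT.of_surjective (key T k (by omega) hT i hi)
        (Submodule.mapQ _ _ LinearMap.id hle) ?_ ?_
      · intro x
        obtain ⟨x, rfl⟩ := Submodule.Quotient.mk_surjective _ x
        exact ⟨Submodule.Quotient.mk x, rfl⟩
      · ext x
        obtain ⟨x, rfl⟩ := Submodule.Quotient.mk_surjective _ x
        rw [LinearMap.mem_ker, Submodule.mapQ_apply, LinearMap.id_apply,
          Submodule.Quotient.mk_eq_zero, Finset.coe_insert, RegularFamily.span_image_insert,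
          Submodule.mem_smul_pointwise_iff_exists]
        constructor
        · intro hx
          obtain ⟨a, ha, b, hb, rfl⟩ := Submodule.mem_sup.1 hx
          obtain ⟨c, rfl⟩ := Ideal.mem_span_singleton'.1 hb
          refine ⟨Submodule.Quotient.mk c, trivial, ?_⟩
          rw [← Submodule.Quotient.mk_smul, Submodule.Quotient.eq, smul_eq_mul]
          have : y i * c - (a + c * y i) = -a := by ring
          rw [this]
          exact neg_mem ha
        · rintro ⟨b, -, hb⟩
          obtain ⟨b, rfl⟩ := Submodule.Quotient.mk_surjective _ b
          rw [← Submodule.Quotient.mk_smul, Submodule.Quotient.eq, smul_eq_mul] at hb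
          refine Submodule.mem_sup.2 ⟨x - b * y i, by convert neg_mem hb using 1; ring, b * y i,
            Ideal.mem_span_singleton'.2 ⟨b, rfl⟩, by ring⟩
  intro T i hi u hu
  have hT : ((T.toFinite.toFinset : Finset ι) : Set ι) = T := T.toFinite.coe_toFinset
  have hiT : i ∉ T.toFinite.toFinset := by simpa using hi
  have hcard : T.toFinite.toFinset.card + 1 ≤ Fintype.card ι := by
    rw [← Finset.card_insert_of_notMem hiT]
    exact Finset.card_le_univ _
  obtain ⟨k, hk⟩ := Nat.exists_eq_add_of_le hcard
  have := key T.toFinite.toFinset k (by omega) (main _ _ (by omega)) i hiT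
  rw [hT] at this
  refine (Submodule.Quotient.mk_eq_zero _).1 (this ?_)
  change y i • _ = y i • 0
  rw [smul_zero, ← Submodule.Quotient.mk_smul, Submodule.Quotient.mk_eq_zero]
  exact hu

end ExtVanishing

namespace Ideal

variable {R : Type*} [CommRing R]

lemma colength_add_colength (K A L : Ideal R) (y : R) (h : ∀ u, u ∈ L ↔ u ∈ A ∧ y * u ∈ K) :
    colength K + colength A = colength L + colength (K ⊔ span {y} * A) := by
  have hLA : L ≤ A := fun u hu => ((h u).1 hu).1
  rw [length_quotient_eq_add L A hLA, add_right_comm]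
  congr 1
  unfold colength
  have hmul : ∀ u : A, (u : R) ∈ L ↔ y * u ∈ K := fun u => by simp [h]
  refine Module.length_eq_add_of_exact
    (Submodule.mapQ (L.submoduleOf A) K (LinearMap.mulLeft R y ∘ₗ A.subtype)
      fun u hu => (hmul u).1 hu)
    (Submodule.mapQ K (K ⊔ span {y} * A) LinearMap.id le_sup_left) ?_ ?_ ?_
  · rw [← LinearMap.ker_eq_bot, eq_bot_iff]
    intro x hx
    obtain ⟨x, rfl⟩ := Submodule.Quotient.mk_surjective _ x
    exact (Submodule.Quotient.mk_eq_zero _).2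
      ((hmul x).2 ((Submodule.Quotient.mk_eq_zero K (x := y * x)).1 hx))
  · intro x
    obtain ⟨x, rfl⟩ := Submodule.Quotient.mk_surjective _ x
    exact ⟨Submodule.Quotient.mk x, rfl⟩
  · intro x
    obtain ⟨x, rfl⟩ := Submodule.Quotient.mk_surjective _ x
    simp only [Submodule.mapQ_apply, LinearMap.id_apply, Set.mem_range]
    rw [Submodule.Quotient.mk_eq_zero, Submodule.mem_sup]
    constructor
    · rintro ⟨k, hk, z, hz, rfl⟩
      obtain ⟨b, hb, rfl⟩ := mem_span_singleton_mul.1 hz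
      refine ⟨Submodule.Quotient.mk ⟨b, hb⟩, ?_⟩
      refine (Submodule.Quotient.eq K).2 ?_
      simpa using hk
    · rintro ⟨b, hb⟩
      obtain ⟨b, rfl⟩ := Submodule.Quotient.mk_surjective _ b
      have hb' : y * b - x ∈ K := (Submodule.Quotient.eq K).1 hb
      exact ⟨x - y * b, by convert neg_mem hb' using 1; ring, y * b,
        mem_span_singleton_mul.2 ⟨b, b.2, rfl⟩, by ring⟩

lemma colength_anti {K L : Ideal R} (h : K ≤ L) : colength L ≤ colength K := by
  rw [length_quotient_eq_add K L h]
  exact le_add_self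

lemma colength_top : colength (⊤ : Ideal R) = 0 :=
  Module.length_eq_zero_iff.2 (Ideal.Quotient.subsingleton_iff.2 rfl)

lemma le_of_colength_lt {K L : Ideal R} (h : K ≤ L) (hlt : colength K < 1 + colength L) :
    L ≤ K := by
  rw [length_quotient_eq_add K L h] at hlt
  have h0 : Module.length R (L ⧸ K.submoduleOf L) = 0 := by
    by_contra h0
    exact hlt.not_ge (add_le_add_left (Order.one_le_iff_ne_zero.2 h0) _)
  rw [Module.length_eq_zero_iff, Submodule.Quotient.subsingleton_iff,
    Submodule.submoduleOf_eq_top] at h0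
  exact h0

lemma mem_span_range_mul {ι : Type*} [Fintype ι] (a : ι → R) (B : Ideal R) (x : R) :
    x ∈ span (Set.range a) * B ↔ ∃ w : ι → R, (∀ i, w i ∈ B) ∧ ∑ i, a i * w i = x := by
  constructor
  · intro hx
    rw [mul_comm, ← smul_eq_mul, span,
      Submodule.mem_ideal_smul_span_iff_exists_sum] at hx
    obtain ⟨w, hw, rfl⟩ := hx
    refine ⟨(w : ι → R), hw, ?_⟩
    rw [Finsupp.sum_fintype _ _ (by simp)]
    exact Finset.sum_congr rfl fun i _ => mul_comm _ _
  · rintro ⟨w, hw, rfl⟩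
    exact Submodule.sum_mem _ fun i _ =>
      mul_mem_mul (subset_span (Set.mem_range_self i)) (hw i)

end Ideal

section EakinSathaye

open Ideal

variable {R : Type*} [CommRing R] [IsLocalRing R]

theorem exists_finset_le_span_mul_sup {ι : Type*} [Fintype ι] (A B K : Ideal R) (hA : A.FG)
    (hBA : maximalIdeal R * B ≤ A) (a b : ι → R) (ha : ∀ i, a i ∈ maximalIdeal R)
    (hb : ∀ i, b i ∈ maximalIdeal R) (h : A ≤ span (Set.range a) * B ⊔ K) :
    ∃ F : Finset (ResidueField R), ∀ c : R, residue R c ∉ F →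
      A ≤ span (Set.range fun i => a i + c * (b i - a i)) * B ⊔ K := by
  classical
  obtain ⟨p, u, rfl⟩ := Submodule.fg_iff_exists_fin_generating_family.1 hA
  have hu : ∀ j, ∃ w : ι → R, (∀ i, w i ∈ B) ∧ u j - ∑ i, a i * w i ∈ K := by
    intro j
    obtain ⟨x, hx, v, hv, e⟩ := Submodule.mem_sup.1 (h (Submodule.subset_span ⟨j, rfl⟩))
    obtain ⟨w, hw, rfl⟩ := (mem_span_range_mul _ _ _).1 hx
    exact ⟨w, hw, by rwa [← e, add_sub_cancel_left]⟩
  choose w hw hK using hu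
  have hN : ∀ j, ∃ N : Fin p → R, ∑ l, N l * u l = ∑ i, (b i - a i) * w j i := by
    intro j
    refine Ideal.mem_span_range_iff_exists_fun.1 (hBA ?_)
    exact sum_mem fun i _ => mul_mem_mul (sub_mem (hb i) (ha i)) (hw j i)
  choose N hN using hN
  let Q : Polynomial R :=
    (1 + (Polynomial.X : Polynomial R) • (Matrix.of N).map Polynomial.C).det
  have hQ : ∀ c, Q.eval c = (1 + c • Matrix.of N).det := by
    intro c
    rw [← Polynomial.coe_evalRingHom, RingHom.map_det]
    congr 1
    ext i j
    by_cases hij : i = j <;> simp [hij, mul_comm c]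
  have hQ0 : Q.map (residue R) ≠ 0 := by
    intro h0
    have : (Q.map (residue R)).eval (residue R 0) = residue R 1 := by
      rw [Polynomial.eval_map_apply, hQ]
      simp
    rw [h0] at this
    simp at this
  refine ⟨(Q.map (residue R)).roots.toFinset, fun c hc => ?_⟩
  have hunit : IsUnit (1 + c • Matrix.of N).det := by
    rw [← hQ, ← residue_ne_zero_iff_isUnit]
    rw [Multiset.mem_toFinset, Polynomial.mem_roots hQ0, Polynomial.IsRoot,
      Polynomial.eval_map_apply] at hc
    exact hc
  have hmem : ∀ j, ∑ l, (1 + c • Matrix.of N) j l * u l ∈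
      span (Set.range fun i => a i + c * (b i - a i)) * B ⊔ K := by
    intro j
    have : ∑ l, (1 + c • Matrix.of N) j l * u l =
        ∑ i, (a i + c * (b i - a i)) * w j i + (u j - ∑ i, a i * w j i) := by
      simp only [Matrix.add_apply, Matrix.smul_apply, Matrix.of_apply, add_mul,
        Finset.sum_add_distrib, smul_eq_mul, mul_assoc, ← Finset.mul_sum, hN]
      simp [Matrix.one_apply]
      ring
    rw [this]
    exact add_mem (mem_sup_left ((mem_span_range_mul _ _ _).2 ⟨w j, hw j, rfl⟩))
      (mem_sup_right (hK j))
  refine span_le.2 ?_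
  rintro _ ⟨j, rfl⟩
  have hadj : (1 + c • Matrix.of N).det * u j =
      ∑ i, (1 + c • Matrix.of N).adjugate j i * ∑ l, (1 + c • Matrix.of N) i l * u l := by
    have h1 := congrArg (fun M => (M.mulVec u) j) (Matrix.adjugate_mul (1 + c • Matrix.of N))
    simp only [← Matrix.mulVec_mulVec, Matrix.smul_mulVec, Matrix.one_mulVec] at h1
    exact h1.symm
  obtain ⟨d, hd⟩ := hunit.exists_left_inv
  have : u j = d * ((1 + c • Matrix.of N).det * u j) := by rw [← mul_assoc, hd, one_mul]
  rw [SetLike.mem_coe, this, hadj]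
  exact Ideal.mul_mem_left _ _ (sum_mem fun i _ => Ideal.mul_mem_left _ _ (hmem i))

theorem exists_forall_le_span_mul_sup [Infinite (ResidueField R)] {ι κ : Type*} [Fintype ι]
    (A B : Ideal R) (hA : A.FG) (hBA : maximalIdeal R * B ≤ A) (K : κ → Ideal R) (S : Finset κ)
    (h : ∀ j, ∃ a : ι → R, (∀ i, a i ∈ maximalIdeal R) ∧ A ≤ span (Set.range a) * B ⊔ K j) :
    ∃ a : ι → R, (∀ i, a i ∈ maximalIdeal R) ∧
      ∀ j ∈ S, A ≤ span (Set.range a) * B ⊔ K j := by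
  classical
  induction S using Finset.induction_on with
  | empty => exact ⟨0, fun i => zero_mem _, by simp⟩
  | insert j S hj ih =>
    obtain ⟨a, ha, haS⟩ := ih
    obtain ⟨b, hb, hbj⟩ := h j
    have h1 : ∀ l, ∃ F : Finset (ResidueField R), l ∈ S → ∀ c : R, residue R c ∉ F →
        A ≤ span (Set.range fun i => a i + c * (b i - a i)) * B ⊔ K l := by
      intro l
      by_cases hl : l ∈ S
      · obtain ⟨F, hF⟩ := exists_finset_le_span_mul_sup A B (K l) hA hBA a b ha hb (haS l hl)
        exact ⟨F, fun _ => hF⟩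
      · exact ⟨∅, fun h => absurd h hl⟩
    choose F hF using h1
    obtain ⟨G, hG⟩ := exists_finset_le_span_mul_sup A B (K j) hA hBA b a hb ha hbj
    obtain ⟨c, hc⟩ := Infinite.exists_notMem_finset (S.biUnion F ∪ G.image fun x => 1 - x)
    obtain ⟨c, rfl⟩ := residue_surjective c
    simp only [Finset.mem_union, Finset.mem_biUnion, Finset.mem_image, not_or, not_exists,
      not_and] at hc
    refine ⟨fun i => a i + c * (b i - a i), fun i => add_mem (ha i)
      (Ideal.mul_mem_left _ _ (sub_mem (hb i) (ha i))), fun l hl => ?_⟩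
    rcases Finset.mem_insert.1 hl with rfl | hl
    · have := hG (1 - c) (fun h => hc.2 _ h (by rw [map_sub, map_one]; ring))
      convert this using 6
      ring
    · exact hF l hl c (hc.1 l hl)

/-- A local form of the Eakin-Sathaye theorem. -/
theorem eakinSathaye [IsNoetherianRing R] [Infinite (ResidueField R)] (n s : ℕ) (K : Ideal R)
    (h₁ : maximalIdeal R ^ (n + 1) ≤ K) (h₂ : K ≤ maximalIdeal R ^ n)
    (hK : colength K < (n + s).choose s + colength (maximalIdeal R ^ n)) :
    ∃ z : Fin s → R, (∀ i, z i ∈ maximalIdeal R) ∧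
      maximalIdeal R ^ n ≤ span (Set.range z) * maximalIdeal R ^ (n - 1) ⊔ K := by
  induction n generalizing s K with
  | zero =>
    refine ⟨0, fun i => zero_mem _, le_sup_of_le_right (le_of_colength_lt h₂ ?_)⟩
    simpa using hK
  | succ n ihn =>
    induction s generalizing K with
    | zero =>
      refine ⟨0, fun i => zero_mem _, le_sup_of_le_right (le_of_colength_lt h₂ ?_)⟩
      simpa using hK
    | succ s ihs =>
      rw [Nat.add_sub_cancel]
      have hsingle : ∀ y ∈ maximalIdeal R,
          span {y} * maximalIdeal R ^ n ≤ maximalIdeal R ^ (n + 1) := fun y hy => by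
        rw [pow_succ']
        exact mul_mono_left ((span_singleton_le_iff_mem _).2 hy)
      by_cases hcase : ∃ y ∈ maximalIdeal R, colength (K ⊔ span {y} * maximalIdeal R ^ n) <
          (n + 1 + s).choose s + colength (maximalIdeal R ^ (n + 1))
      · obtain ⟨y, hy, hlt⟩ := hcase
        obtain ⟨z, hz, hle⟩ := ihs _ (h₁.trans le_sup_left) (sup_le h₂ (hsingle y hy)) hlt
        refine ⟨Fin.cons y z, fun i => ?_, ?_⟩
        · refine Fin.cases ?_ (fun i => ?_) i
          · simpa using hy
          · simpa using hz i
        · refine hle.trans ?_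
          rw [Nat.add_sub_cancel, Fin.range_cons, span_insert, Ideal.sup_mul]
          exact sup_le (le_sup_right.trans le_sup_left)
            (sup_le le_sup_right (le_sup_left.trans le_sup_left))
      · push Not at hcase
        have hcol : ∀ y ∈ maximalIdeal R, ∃ z : Fin (s + 1) → R,
            (∀ i, z i ∈ maximalIdeal R) ∧ maximalIdeal R ^ n ≤
              span (Set.range z) * maximalIdeal R ^ (n - 1) ⊔
                (Submodule.comap (LinearMap.mulLeft R y) K ⊓ maximalIdeal R ^ n) := by
          intro y hy
          refine ihn (s + 1) _ (le_inf (fun u hu => h₁ ?_) (pow_le_pow_right n.le_succ))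
            inf_le_right ?_
          · rw [pow_succ']
            exact mul_mem_mul hy hu
          · have h3 := colength_add_colength K (maximalIdeal R ^ n)
              (Submodule.comap (LinearMap.mulLeft R y) K ⊓ maximalIdeal R ^ n) y
              (fun u => by rw [Submodule.mem_inf, and_comm]; rfl)
            have h4 := hcase y hy
            have hfin : colength (maximalIdeal R ^ n) ≠ ⊤ :=
              ne_top_of_le_ne_top hK.ne_top
                (colength_anti (h₂.trans (pow_le_pow_right n.le_succ)))
            by_contra! h5
            have h6 := add_le_add h5 h4
            rw [← h3] at h6
            have hch : ((n + 1 + (s + 1)).choose (s + 1) : ℕ∞) =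
                ((n + (s + 1)).choose (s + 1) : ℕ∞) + ((n + 1 + s).choose s : ℕ∞) := by
              rw [show n + 1 + (s + 1) = (n + (s + 1)).succ by omega, Nat.choose_succ_succ,
                show n + (s + 1) = n + 1 + s by omega]
              push_cast
              exact add_comm _ _
            rw [add_add_add_comm, ← hch, ← add_assoc, add_right_comm] at h6
            exact hK.not_ge ((ENat.add_le_add_iff_right hfin).1 h6)
        obtain ⟨p, u, hu⟩ := Submodule.fg_iff_exists_fin_generating_family.1
          (IsNoetherian.noetherian (maximalIdeal R))
        have hum : ∀ j, u j ∈ maximalIdeal R := fun j =>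
          hu.le (Submodule.subset_span (Set.mem_range_self j))
        have hmn : maximalIdeal R * maximalIdeal R ^ (n - 1) ≤ maximalIdeal R ^ n := by
          rw [← pow_succ']
          exact pow_le_pow_right (by omega)
        obtain ⟨z, hz, hall⟩ := exists_forall_le_span_mul_sup (maximalIdeal R ^ n)
          (maximalIdeal R ^ (n - 1)) (IsNoetherian.noetherian _) hmn _ Finset.univ
          (fun j => hcol (u j) (hum j))
        refine ⟨z, hz, ?_⟩
        have hspan : maximalIdeal R = span (Set.range u) := hu.symm
        rw [pow_succ']
        refine mul_le.2 fun a ha b hb => ?_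
        rw [hspan] at ha
        refine Submodule.span_induction ?_ ?_ ?_ ?_ ha
        · rintro _ ⟨j, rfl⟩
          obtain ⟨c, hc, d, hd, rfl⟩ := Submodule.mem_sup.1 (hall j (Finset.mem_univ j) hb)
          rw [mul_add]
          refine add_mem (mem_sup_left ?_) (mem_sup_right hd.1)
          refine (mul_mono_right hmn) ?_
          rw [mul_left_comm]
          exact mul_mem_mul (hum j) hc
        · rw [zero_mul]
          exact zero_mem _
        · intro x y _ _ hx hy
          rw [add_mul]
          exact add_mem hx hy
        · intro c x _ hx
          rw [smul_eq_mul, mul_assoc]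
          exact Ideal.mul_mem_left _ _ hx

end EakinSathaye

namespace RegularFamily

open Ideal

lemma elim_image_inl {R α β : Type*} [Fintype α] (f : α → R) (x : β → R) :
    Sum.elim f x '' ((Finset.univ.map .inl : Finset (α ⊕ β)) : Set (α ⊕ β)) = Set.range f := by
  ext; simp

lemma elim_image_inr {R α β : Type*} [Fintype β] (f : α → R) (x : β → R) :
    Sum.elim f x '' ((Finset.univ.map .inr : Finset (α ⊕ β)) : Set (α ⊕ β)) = Set.range x := by
  ext; simp

variable {R α β : Type*} [CommRing R] [Fintype α] [Fintype β] [DecidableEq α] [DecidableEq β]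
  {f : α → R} {x : β → R}

lemma span_range_pow_inf_le (h : RegularFamily (Sum.elim f x)) (n : ℕ) :
    span (Set.range x) ^ n ⊓ span (Set.range f) ≤ span (Set.range x) ^ n * span (Set.range f) := by
  have := h.pow_inf_le_mul (Finset.univ.map .inr) (Finset.univ.map .inl) (by
    rw [Finset.disjoint_left]; simp) n
  rwa [elim_image_inl, elim_image_inr] at this

lemma colength_span_range_sup_pow (h : RegularFamily (Sum.elim f x)) (n : ℕ) :
    colength (span (Set.range f) ⊔ span (Set.range x) ^ (n + 1)) =
      ((n + Fintype.card β).choose (Fintype.card β) : ℕ) *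
        colength (span (Set.range f) ⊔ span (Set.range x)) := by
  have := h.length_quotient_sup_pow (Finset.univ.map .inr)
    ((Finset.univ.map .inl : Finset (α ⊕ β)) : Set (α ⊕ β)) (by simp) n
  rwa [elim_image_inl, elim_image_inr, Finset.card_map, Finset.card_univ] at this

end RegularFamily

section Asymptotics

open Nat Topology

lemma exists_lt_add_choose (Len : ℕ → ℕ) (s E : ℕ)
    (hE : Tendsto (fun n : ℕ => (Len n : ℝ) * (s ! : ℕ) / (n : ℝ) ^ s) atTop (𝓝 (E : ℝ))) :
    ∃ n, Len (n + 1) < Len n + (n + s).choose s := by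
  by_contra! h
  have h1 : ∀ n, (n + s).choose (s + 1) ≤ Len n := by
    intro n
    induction n with
    | zero => simp
    | succ n ih =>
      rw [show n + 1 + s = (n + s).succ by omega, Nat.choose_succ_succ]
      linarith [h n]
  have h2 : ∀ n, n ^ (s + 1) ≤ Len n * (s + 1)! := by
    intro n
    rcases n with _ | n
    · simp
    · calc (n + 1) ^ (s + 1) ≤ (n + 1).ascFactorial (s + 1) := Nat.pow_succ_le_ascFactorial _ _
        _ = (s + 1)! * (n + 1 + s).choose (s + 1) := by
          rw [Nat.ascFactorial_eq_factorial_mul_choose, show n + 1 + s = n + (s + 1) by omega]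
        _ ≤ _ := by rw [mul_comm]; exact Nat.mul_le_mul_right _ (h1 _)
  have h3 : Tendsto (fun n : ℕ => (n : ℝ) / (s + 1 : ℕ)) atTop atTop :=
    tendsto_natCast_atTop_atTop.atTop_div_const (by positivity)
  refine not_tendsto_atTop_of_tendsto_nhds hE (tendsto_atTop_mono' _ ?_ h3)
  filter_upwards [eventually_gt_atTop 0] with n hn
  have hn' : (0 : ℝ) < n := Nat.cast_pos.2 hn
  rw [div_le_div_iff₀ (by positivity) (by positivity)]
  have := h2 n
  rw [Nat.factorial_succ] at this
  calc (n : ℝ) * n ^ s = ((n ^ (s + 1) : ℕ) : ℝ) := by push_cast; ring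
    _ ≤ ((Len n * ((s + 1) * s !) : ℕ) : ℝ) := Nat.cast_le.2 this
    _ = _ := by push_cast; ring

lemma le_of_forall_mul_pow_le (Len : ℕ → ℕ) (s E n l : ℕ)
    (hE : Tendsto (fun n : ℕ => (Len n : ℝ) * (s ! : ℕ) / (n : ℝ) ^ s) atTop (𝓝 (E : ℝ)))
    (h : ∀ k, l * (k + 1) ^ s ≤ Len (n + k + 1) * s !) : l ≤ E := by
  have h1 : Tendsto (fun k : ℕ => (l : ℝ) * (((k + 1 : ℕ) : ℝ) / ((n + k + 1 : ℕ) : ℝ)) ^ s) atTop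
      (𝓝 (l * 1 ^ s)) := by
    refine (Tendsto.pow ?_ s).const_mul _
    have h0 : Tendsto (fun k : ℕ => 1 - (n : ℝ) / ((n + k + 1 : ℕ) : ℝ)) atTop (𝓝 (1 - 0)) := by
      refine tendsto_const_nhds.sub (Tendsto.const_div_atTop ?_ _)
      refine tendsto_natCast_atTop_atTop.comp (tendsto_atTop_mono (fun k => ?_) tendsto_id)
      simp only [id]
      omega
    rw [sub_zero] at h0
    refine h0.congr fun k => ?_
    have : ((n + k + 1 : ℕ) : ℝ) ≠ 0 := by positivity
    field_simp
    push_cast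
    ring
  rw [one_pow, mul_one] at h1
  have h2 : Tendsto (fun k : ℕ => n + k + 1) atTop atTop :=
    tendsto_atTop_mono (fun k => by simp only [id]; omega) tendsto_id
  have h3 := le_of_tendsto_of_tendsto' h1 (hE.comp h2) fun k => by
    simp only [Function.comp]
    rw [div_pow, ← mul_div_assoc]
    refine div_le_div_of_nonneg_right ?_ (by positivity)
    exact_mod_cast h k
  exact_mod_cast h3

lemma pow_mul_add_lt_choose (t E p : ℕ) (hE : 1 ≤ E) (hp : p = (t + 1)! * E) :
    p ^ t * E + t < (p + (t + 1)).choose (t + 1) := by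
  have h1 : (p + t + 1) * p ^ t ≤ (t + 1)! * (p + (t + 1)).choose (t + 1) := by
    have h0 : (p + t + 1) * (p + 1).ascFactorial t =
        (t + 1)! * (p + (t + 1)).choose (t + 1) := by
      rw [← Nat.ascFactorial_eq_factorial_mul_choose, Nat.ascFactorial_succ]
      ring
    rw [← h0]
    exact Nat.mul_le_mul_left _ ((Nat.pow_le_pow_left p.le_succ _).trans
      (Nat.pow_succ_le_ascFactorial _ _))
  have h2 : t ! * t < p ^ t := by
    rcases Nat.eq_zero_or_pos t with rfl | ht
    · simp
    · have hp1 : (t + 1)! ≤ p := hp ▸ Nat.le_mul_of_pos_right _ hE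
      calc t ! * t < (t + 1) * t ! := by nlinarith [Nat.factorial_pos t]
        _ = (t + 1)! := (Nat.factorial_succ t).symm
        _ ≤ p := hp1
        _ ≤ p ^ t := Nat.le_self_pow ht.ne' p
  have h3 : (t + 1)! * (p ^ t * E + t) < (t + 1)! * (p + (t + 1)).choose (t + 1) := by
    refine lt_of_lt_of_le ?_ h1
    have : (t + 1)! * (p ^ t * E + t) = p * p ^ t + (t + 1) * (t ! * t) := by
      rw [hp, Nat.factorial_succ]; ring
    rw [this]
    nlinarith
  exact lt_of_mul_lt_mul_left' h3

end Asymptotics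

namespace Ideal

variable {R : Type*} [CommRing R]

lemma colength_inf_add_colength_sup (X Y : Ideal R) :
    colength (X ⊓ Y) + colength (X ⊔ Y) = colength X + colength Y := by
  have e := (LinearMap.quotientInfEquivSupQuotient X Y).length_eq
  rw [← Submodule.comap_inf] at e
  have h1 : Module.length R (X ⧸ (X ⊓ Y).submoduleOf X) =
      Module.length R ((X ⊔ Y : Ideal R) ⧸ Y.submoduleOf (X ⊔ Y)) := e
  rw [length_quotient_eq_add (X ⊓ Y) X inf_le_left, length_quotient_eq_add Y (X ⊔ Y) le_sup_right,
    h1]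
  ring

lemma colength_le_of_mul_mem {K A : Ideal R} {z : R} (h : ∀ u ∈ A, z * u ∈ K) :
    colength K ≤ colength A + colength (K ⊔ span {z}) := by
  rw [length_quotient_eq_add_of_colon K (Submodule.comap (LinearMap.mulLeft R z) K) z
    fun u => Iff.rfl]
  gcongr
  exact colength_anti h

lemma colength_sup_span_pow_le (X : Ideal R) (z : R) (p : ℕ) :
    colength (X ⊔ span {z ^ p}) ≤ p * colength (X ⊔ span {z}) := by
  induction p with
  | zero =>
    rw [pow_zero, span_singleton_one, sup_top_eq, colength_top]
    exact zero_le
  | succ p ih =>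
    have h : ∀ u ∈ X ⊔ span {z ^ p}, z * u ∈ X ⊔ span {z ^ (p + 1)} := by
      intro u hu
      obtain ⟨a, ha, b, hb, rfl⟩ := Submodule.mem_sup.1 hu
      obtain ⟨c, rfl⟩ := mem_span_singleton'.1 hb
      rw [mul_add]
      refine Submodule.add_mem_sup (X.mul_mem_left _ ha) (mem_span_singleton'.2 ⟨c, ?_⟩)
      ring
    refine (colength_le_of_mul_mem h).trans ?_
    have h2 : colength (X ⊔ span {z ^ (p + 1)} ⊔ span {z}) ≤ colength (X ⊔ span {z}) :=
      colength_anti (sup_le_sup_right le_sup_left _)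
    calc _ ≤ p * colength (X ⊔ span {z}) + colength (X ⊔ span {z}) := add_le_add ih h2
      _ = _ := by push_cast; ring

lemma colength_sup_span_image_pow_le {ι : Type*} [DecidableEq ι] (x : ι → R) (p : ℕ)
    (T : Finset ι) (X : Ideal R) :
    colength (X ⊔ span ((fun i => x i ^ p) '' T)) ≤
      (p ^ T.card : ℕ) * colength (X ⊔ span (x '' T)) := by
  induction T using Finset.induction generalizing X with
  | empty => simp
  | insert a T ha ih =>
    rw [Finset.coe_insert, Set.image_insert_eq, Set.image_insert_eq, span_insert, span_insert,
      Finset.card_insert_of_notMem ha, ← sup_assoc]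
    refine (ih _).trans ?_
    have := colength_sup_span_pow_le (X ⊔ span (x '' T)) (x a) p
    rw [show X ⊔ span {x a ^ p} ⊔ span (x '' T) = X ⊔ span (x '' T) ⊔ span {x a ^ p} by
      rw [sup_right_comm], ← sup_assoc X, sup_right_comm X (span {x a})]
    calc _ ≤ ((p ^ T.card : ℕ) : ℕ∞) * (p * colength (X ⊔ span (x '' T) ⊔ span {x a})) := by gcongr
      _ = _ := by push_cast; ring

lemma pow_add_le_of_pow_succ_le {m X I : Ideal R} {q : ℕ} (h : m ^ (q + 1) ≤ X * m ^ q ⊔ I)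
    (k : ℕ) : m ^ (q + k) ≤ X ^ k * m ^ q ⊔ I := by
  induction k with
  | zero => simp
  | succ k ih =>
    calc m ^ (q + (k + 1)) = m * m ^ (q + k) := by ring
      _ ≤ m * (X ^ k * m ^ q ⊔ I) := mul_mono_right ih
      _ = X ^ k * m ^ (q + 1) ⊔ m * I := by rw [Ideal.mul_sup]; ring_nf
      _ ≤ X ^ k * (X * m ^ q ⊔ I) ⊔ I := sup_le_sup (mul_mono_right h) mul_le_right
      _ ≤ _ := by
        rw [Ideal.mul_sup, ← mul_assoc, ← pow_succ]
        exact sup_le (sup_le le_sup_left (mul_le_right.trans le_sup_right)) le_sup_right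

end Ideal

section Local

open Ideal

variable {R : Type*} [CommRing R] [IsLocalRing R]

local notation "𝔪" => maximalIdeal R

lemma colength_maximalIdeal : colength (𝔪) = 1 := by
  rw [colength, Module.length_eq_one_iff]
  rw [isSimpleModule_iff_isCoatom]
  exact (maximalIdeal.isMaximal R).out

lemma one_le_colength {K : Ideal R} (h : K ≤ 𝔪) : 1 ≤ colength K :=
  colength_maximalIdeal.symm.le.trans (colength_anti h)

lemma colength_le_add_card {ι : Type*} [DecidableEq ι] (u : ι → R) (T : Finset ι) (K : Ideal R)
    (h : ∀ i ∈ T, ∀ a ∈ 𝔪, u i * a ∈ K) :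
    colength K ≤ T.card + colength (K ⊔ span (u '' T)) := by
  induction T using Finset.induction generalizing K with
  | empty => simp
  | insert b T hb ih =>
    rw [Finset.coe_insert, Set.image_insert_eq, span_insert, Finset.card_insert_of_notMem hb,
      ← sup_assoc]
    have h1 := colength_le_of_mul_mem (h b (Finset.mem_insert_self _ _))
    rw [colength_maximalIdeal] at h1
    have h2 := ih (K ⊔ span {u b}) fun i hi a ha =>
      Ideal.mem_sup_left (h i (Finset.mem_insert_of_mem hi) a ha)
    calc _ ≤ _ := h1
      _ ≤ 1 + _ := add_le_add_right h2 _
      _ = _ := by push_cast; ring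

variable [IsNoetherianRing R]

lemma le_of_le_sup_maximalIdeal_mul {A B : Ideal R} (h : A ≤ B ⊔ 𝔪 * A) : A ≤ B :=
  Submodule.le_of_le_smul_of_le_jacobson_bot (IsNoetherian.noetherian A)
    (maximalIdeal_le_jacobson _) h

lemma colength_maximalIdeal_pow_ne_top (n : ℕ) : colength (𝔪 ^ n) ≠ ⊤ := by
  induction n with
  | zero => simp [colength_top]
  | succ n ih =>
    classical
    obtain ⟨T, hT⟩ := IsNoetherian.noetherian (𝔪 ^ n)
    have h := colength_le_add_card id T (𝔪 ^ (n + 1)) fun i hi a ha => by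
      rw [pow_succ]
      exact mul_mem_mul (hT ▸ subset_span hi) ha
    rw [Set.image_id, show span (T : Set R) = 𝔪 ^ n from hT,
      sup_eq_right.2 (pow_le_pow_right n.le_succ)] at h
    exact ne_top_of_le_ne_top (by simpa using ih) h

lemma exists_pow_le_span_mul_sup [Infinite (ResidueField R)] (I : Ideal R) (Len : ℕ → ℕ)
    (hLen : ∀ n, colength (I ⊔ 𝔪 ^ n) = Len n) (n s : ℕ)
    (h : Len (n + 1) < Len n + (n + s).choose s) :
    ∃ z : Fin s → R, (∀ i, z i ∈ 𝔪) ∧ 𝔪 ^ n ≤ span (Set.range z) * 𝔪 ^ (n - 1) ⊔ I := by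
  have hle : 𝔪 ^ (n + 1) ≤ 𝔪 ^ n := pow_le_pow_right n.le_succ
  have e := colength_inf_add_colength_sup (𝔪 ^ n) (I ⊔ 𝔪 ^ (n + 1))
  rw [hLen, show 𝔪 ^ n ⊔ (I ⊔ 𝔪 ^ (n + 1)) = I ⊔ 𝔪 ^ n by
    rw [sup_left_comm, sup_eq_left.2 hle], hLen] at e
  obtain ⟨c, hc⟩ := ENat.ne_top_iff_exists.1 (colength_maximalIdeal_pow_ne_top (R := R) n)
  have hK : colength (𝔪 ^ n ⊓ (I ⊔ 𝔪 ^ (n + 1))) < (n + s).choose s + colength (𝔪 ^ n) := by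
    rw [← hc] at e ⊢
    have : colength (𝔪 ^ n ⊓ (I ⊔ 𝔪 ^ (n + 1))) ≠ ⊤ := by
      intro h0
      rw [h0, top_add] at e
      exact absurd e.symm (by norm_cast)
    obtain ⟨k, hk⟩ := ENat.ne_top_iff_exists.1 this
    rw [← hk] at e ⊢
    norm_cast at e ⊢
    omega
  obtain ⟨z, hz, hzle⟩ := eakinSathaye n s _ (le_inf hle le_sup_right) inf_le_left hK
  refine ⟨z, hz, le_of_le_sup_maximalIdeal_mul (hzle.trans ?_)⟩
  rw [← pow_succ']
  refine sup_le (le_sup_left.trans le_sup_left) (inf_le_right.trans ?_)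
  exact sup_le_sup_right le_sup_right _

end Local

section Local

open Ideal

open scoped Nat

universe u

variable {R : Type u} [CommRing R] [IsLocalRing R]

local notation "𝔪" => maximalIdeal R

lemma regularFamily_elim [IsNoetherianRing R] {r s : ℕ} (hExt : ExtVanishing R (r + s) R)
    {f : Fin r → R} (hf : ∀ i, f i ∈ 𝔪) {x : Fin s → R} (hx : ∀ i, x i ∈ 𝔪) {n : ℕ}
    (h : 𝔪 ^ n ≤ span (Set.range x) ⊔ span (Set.range f)) : RegularFamily (Sum.elim f x) := by
  refine ExtVanishing.regularFamily (by simpa using hExt) _ ?_ n ?_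
  · rintro (i | i)
    exacts [hf i, hx i]
  · rwa [Set.Sum.elim_range, span_union, sup_comm]

lemma exists_colength_eq_and_le {r s : ℕ} {f : Fin r → R} {x : Fin s → R}
    (hreg : RegularFamily (Sum.elim f x)) (Len : ℕ → ℕ)
    (hLen : ∀ n, colength (span (Set.range f) ⊔ 𝔪 ^ n) = Len n) (E : ℕ)
    (hE : Tendsto (fun n : ℕ => (Len n : ℝ) * (s ! : ℕ) / (n : ℝ) ^ s) atTop (nhds (E : ℝ)))
    {q : ℕ} (hx : 𝔪 ^ (q + 1) ≤ span (Set.range x) * 𝔪 ^ q ⊔ span (Set.range f)) :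
    ∃ l : ℕ, colength (span (Set.range f) ⊔ span (Set.range x)) = l ∧ l ≤ E := by
  have key : ∀ k, ((k + s).choose s : ℕ) * colength (span (Set.range f) ⊔ span (Set.range x)) ≤
      Len (q + k + 1) := by
    intro k
    have := hreg.colength_span_range_sup_pow k
    rw [Fintype.card_fin] at this
    rw [← this, ← hLen]
    refine colength_anti (sup_le le_sup_left ?_)
    rw [add_assoc]
    refine (pow_add_le_of_pow_succ_le hx (k + 1)).trans ?_
    exact sup_le (mul_le_left.trans le_sup_right) le_sup_left
  have hfin : colength (span (Set.range f) ⊔ span (Set.range x)) ≠ ⊤ := by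
    have := key 0
    rw [zero_add, Nat.choose_self, Nat.cast_one, one_mul] at this
    exact ne_top_of_le_ne_top (ENat.natCast_ne_top _) this
  obtain ⟨l, hl⟩ := ENat.ne_top_iff_exists.1 hfin
  refine ⟨l, hl.symm, le_of_forall_mul_pow_le Len s E q l hE fun k => ?_⟩
  have h1 := key k
  rw [← hl] at h1
  norm_cast at h1
  calc l * (k + 1) ^ s ≤ l * (k + 1).ascFactorial s :=
        Nat.mul_le_mul_left _ (Nat.pow_succ_le_ascFactorial _ _)
    _ = (k + s).choose s * l * s ! := by
        rw [Nat.ascFactorial_eq_factorial_mul_choose]; ring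
    _ ≤ _ := Nat.mul_le_mul_right _ h1

lemma lt_add_one_of_colength_le (I : Ideal R) (Len : ℕ → ℕ)
    (hLen : ∀ n, colength (I ⊔ 𝔪 ^ n) = Len n) (E : ℕ) (hE : colength I ≤ E) :
    Len (E + 1) < Len E + 1 := by
  have hle : ∀ n, I ⊔ 𝔪 ^ (n + 1) ≤ I ⊔ 𝔪 ^ n := fun n =>
    sup_le_sup_left (pow_le_pow_right n.le_succ) _
  by_contra! hcon
  have hstep : ∀ n, Len (n + 1) < Len n + 1 → I ⊔ 𝔪 ^ n ≤ I ⊔ 𝔪 ^ (n + 1) := by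
    intro n hn
    refine le_of_colength_lt (hle n) ?_
    rw [hLen, hLen, add_comm 1]
    exact_mod_cast hn
  have hmul : ∀ n, I ⊔ 𝔪 ^ n ≤ I ⊔ 𝔪 ^ (n + 1) → I ⊔ 𝔪 ^ (n + 1) ≤ I ⊔ 𝔪 ^ (n + 2) := by
    intro n hn
    refine sup_le le_sup_left ?_
    rw [pow_succ']
    calc 𝔪 * 𝔪 ^ n ≤ 𝔪 * (I ⊔ 𝔪 ^ (n + 1)) := mul_mono_right (le_sup_right.trans hn)
      _ ≤ _ := by
        rw [Ideal.mul_sup, ← pow_succ']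
        exact sup_le_sup_right mul_le_right _
  have hall : ∀ n ≤ E, Len n + 1 ≤ Len (n + 1) := by
    intro n hn
    by_contra! hlt
    have : ∀ k, I ⊔ 𝔪 ^ (n + k) ≤ I ⊔ 𝔪 ^ (n + k + 1) := by
      intro k
      induction k with
      | zero => exact hstep n hlt
      | succ k ih => exact hmul _ ih
    obtain ⟨k, rfl⟩ := Nat.exists_eq_add_of_le hn
    have h2 := colength_anti (this k)
    rw [hLen, hLen] at h2
    norm_cast at h2
    omega
  have hge : ∀ n ≤ E + 1, n ≤ Len n := by
    intro n
    induction n with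
    | zero => simp
    | succ n ih => intro hn; have := hall n (by omega); have := ih (by omega); omega
  have h1 : colength (I ⊔ 𝔪 ^ (E + 1)) ≤ E := (colength_anti le_sup_left).trans hE
  rw [hLen] at h1
  norm_cast at h1
  have := hge (E + 1) le_rfl
  omega

lemma lt_add_choose_of_colength_le {t : ℕ} (I : Ideal R) (Len : ℕ → ℕ)
    (hLen : ∀ n, colength (I ⊔ 𝔪 ^ n) = Len n) (x : Fin (t + 1) → R) (hx : ∀ i, x i ∈ 𝔪) (l E : ℕ)
    (hl : colength (I ⊔ span (Set.range x)) = l) (hlE : l ≤ E) (hE : 1 ≤ E) (p : ℕ)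
    (hp : p = (t + 1)! * E) : Len (p + 1) < Len p + (p + (t + 1)).choose (t + 1) := by
  let u : Fin t → R := fun i => x i.succ ^ p
  have h1 : colength (I ⊔ 𝔪 ^ (p + 1)) ≤ t + colength (I ⊔ 𝔪 ^ (p + 1) ⊔ span (Set.range u)) := by
    have := colength_le_add_card u Finset.univ (I ⊔ 𝔪 ^ (p + 1)) fun i _ a ha => by
      refine Ideal.mem_sup_right ?_
      rw [pow_succ]
      exact mul_mem_mul (pow_mem_pow (hx _) _) ha
    simpa using this
  have h2 : colength (I ⊔ 𝔪 ^ (p + 1) ⊔ span (Set.range u)) ≤ colength (I ⊔ 𝔪 ^ p) +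
      colength (I ⊔ 𝔪 ^ (p + 1) ⊔ span (Set.range u) ⊔ span {x 0}) := by
    refine colength_le_of_mul_mem fun v hv => Ideal.mem_sup_left ?_
    obtain ⟨a, ha, b, hb, rfl⟩ := Submodule.mem_sup.1 hv
    rw [mul_add]
    refine Submodule.add_mem_sup (I.mul_mem_left _ ha) ?_
    rw [pow_succ']
    exact mul_mem_mul (hx 0) hb
  have h3 : colength (I ⊔ 𝔪 ^ (p + 1) ⊔ span (Set.range u) ⊔ span {x 0}) ≤ (p ^ t : ℕ) * l := by
    have := colength_sup_span_image_pow_le (fun i : Fin t => x i.succ) p Finset.univ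
      (I ⊔ span {x 0})
    rw [Finset.coe_univ, Set.image_univ, Set.image_univ, Finset.card_univ, Fintype.card_fin,
      sup_assoc I (span {x 0}) (span (Set.range fun i : Fin t => x i.succ)), ← span_union,
      show {x 0} ∪ (Set.range fun i : Fin t => x i.succ) = Set.range x by
        rw [Fin.range_fin_succ, Set.singleton_union]; rfl, hl] at this
    refine le_trans (colength_anti ?_) this
    exact sup_le (sup_le (le_sup_left.trans (le_sup_left.trans le_sup_left)) le_sup_right)
      (le_sup_right.trans le_sup_left)
  have h4 : (Len (p + 1) : ℕ∞) ≤ t + (Len p + (p ^ t : ℕ) * l) := by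
    rw [← hLen, ← hLen]
    exact h1.trans (add_le_add_right (h2.trans (add_le_add_right h3 _)) _)
  norm_cast at h4
  have h5 := pow_mul_add_lt_choose t E p hE hp
  have h6 := Nat.mul_le_mul_left (p ^ t) hlE
  omega

theorem colength_sup_pow_eq_of_infinite [IsNoetherianRing R] [Infinite (ResidueField R)] {r s : ℕ}
    (hExt : ExtVanishing R (r + s) R) (f : Fin r → R) (hf : ∀ i, f i ∈ 𝔪) (Len : ℕ → ℕ)
    (hLen : ∀ n, colength (span (Set.range f) ⊔ 𝔪 ^ n) = Len n) (E : ℕ)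
    (hE : Tendsto (fun n : ℕ => (Len n : ℝ) * (s ! : ℕ) / (n : ℝ) ^ s) atTop (nhds (E : ℝ)))
    (ε : Fin r → R) (hε : ∀ i, ε i ∈ 𝔪 ^ (s ! * E + 1)) (n : ℕ) :
    colength (span (Set.range f) ⊔ 𝔪 ^ n) =
      colength (span (Set.range fun j => f j + ε j) ⊔ 𝔪 ^ n) := by
  obtain ⟨p, hp⟩ : ∃ p, p = s ! * E := ⟨_, rfl⟩
  rw [← hp] at hε
  set I := span (Set.range f) with hI
  set I' := span (Set.range fun j => f j + ε j) with hI'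
  have hIm : I ≤ 𝔪 := by
    rw [hI, span_le]
    rintro _ ⟨i, rfl⟩
    exact hf i
  have hred : ∀ n, Len (n + 1) < Len n + (n + s).choose s → 1 ≤ n ∧
      ∃ z : Fin s → R, (∀ i, z i ∈ 𝔪) ∧ 𝔪 ^ n ≤ span (Set.range z) * 𝔪 ^ (n - 1) ⊔ I := by
    intro n hn
    obtain ⟨z, hz, hzle⟩ := exists_pow_le_span_mul_sup I Len hLen n s hn
    refine ⟨Nat.one_le_iff_ne_zero.2 ?_, z, hz, hzle⟩
    rintro rfl
    have h1 : span (Set.range z) ≤ 𝔪 := by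
      rw [span_le]
      rintro _ ⟨i, rfl⟩
      exact hz i
    rw [pow_zero, one_eq_top] at hzle
    exact (maximalIdeal.isMaximal R).ne_top
      (top_le_iff.1 (hzle.trans (sup_le (mul_le_left.trans h1) hIm)))
  have hp1 : 1 ≤ p ∧ ∃ z : Fin s → R, (∀ i, z i ∈ 𝔪) ∧
      𝔪 ^ p ≤ span (Set.range z) * 𝔪 ^ (p - 1) ⊔ I := by
    apply hred
    obtain ⟨n, hn⟩ := exists_lt_add_choose Len s E hE
    obtain ⟨hn1, x, hx, hxle⟩ := hred n hn
    obtain ⟨q, rfl⟩ := Nat.exists_eq_add_of_le' hn1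
    rw [Nat.add_sub_cancel] at hxle
    have hreg := regularFamily_elim hExt hf hx (hxle.trans (sup_le_sup_right mul_le_left _))
    obtain ⟨l, hl, hlE⟩ := exists_colength_eq_and_le hreg Len hLen E hE hxle
    have hl1 : 1 ≤ l := by
      have : 1 ≤ colength (I ⊔ span (Set.range x)) := one_le_colength <| sup_le hIm <| by
        rw [span_le]
        rintro _ ⟨i, rfl⟩
        exact hx i
      rw [hl] at this
      exact_mod_cast this
    cases s with
    | zero =>
      have hlt : Len (E + 1) < Len E + 1 := by
        refine lt_add_one_of_colength_le I Len hLen E ?_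
        rw [Set.range_eq_empty x, span_empty, sup_bot_eq] at hl
        rw [hl]
        exact_mod_cast hlE
      rw [Nat.factorial_zero, one_mul] at hp
      simpa [hp] using hlt
    | succ t => exact lt_add_choose_of_colength_le I Len hLen x hx l E hl hlE (hl1.trans hlE) p hp
  obtain ⟨hp1, x, hx, hxI⟩ := hp1
  obtain ⟨q, rfl⟩ := Nat.exists_eq_add_of_le' hp1
  rw [Nat.add_sub_cancel] at hxI
  set X := span (Set.range x) with hX
  have hI₁ : I ≤ I' ⊔ 𝔪 ^ (q + 1 + 1) := by
    rw [hI, span_le]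
    rintro _ ⟨i, rfl⟩
    have h := Submodule.add_mem_sup (S := I') (T := 𝔪 ^ (q + 1 + 1)) (subset_span ⟨i, rfl⟩)
      (neg_mem (hε i))
    simpa using h
  have hI₂ : I' ≤ I ⊔ 𝔪 ^ (q + 1 + 1) := by
    rw [hI', span_le]
    rintro _ ⟨i, rfl⟩
    exact Submodule.add_mem_sup (subset_span ⟨i, rfl⟩) (hε i)
  have hxI' : 𝔪 ^ (q + 1) ≤ X * 𝔪 ^ q ⊔ I' := by
    refine le_of_le_sup_maximalIdeal_mul (hxI.trans ?_)
    rw [← pow_succ', sup_assoc]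
    exact sup_le_sup_left hI₁ _
  have hpp : 𝔪 ^ (q + 1 + 1) ≤ 𝔪 ^ (q + 1) := pow_le_pow_right (Nat.le_succ _)
  have hf' : ∀ i, f i + ε i ∈ 𝔪 := fun i =>
    add_mem (hf i) (pow_le_self (Nat.succ_ne_zero _) (hε i))
  have hreg := regularFamily_elim hExt hf hx (hxI.trans (sup_le_sup_right mul_le_left _))
  have hreg' := regularFamily_elim hExt hf' hx (hxI'.trans (sup_le_sup_right mul_le_left _))
  have hIX : I ⊔ X = I' ⊔ X := by
    refine le_antisymm (sup_le (hI₁.trans (sup_le le_sup_left ?_)) le_sup_right)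
      (sup_le (hI₂.trans (sup_le le_sup_left ?_)) le_sup_right)
    · exact hpp.trans (hxI'.trans (sup_le (mul_le_left.trans le_sup_right) le_sup_left))
    · exact hpp.trans (hxI.trans (sup_le (mul_le_left.trans le_sup_right) le_sup_left))
  have hsmall : ∀ n ≤ q + 2, I ⊔ 𝔪 ^ n = I' ⊔ 𝔪 ^ n := fun n hn =>
    le_antisymm (sup_le (hI₁.trans (sup_le_sup_left (pow_le_pow_right hn) _)) le_sup_right)
      (sup_le (hI₂.trans (sup_le_sup_left (pow_le_pow_right hn) _)) le_sup_right)
  rcases le_total n (q + 2) with hn | hn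
  · rw [hsmall n hn]
  obtain ⟨k, rfl⟩ : ∃ k, n = q + (k + 1) := ⟨n - q - 1, by omega⟩
  have expand : ∀ J : Ideal R, 𝔪 ^ (q + 1) ≤ X * 𝔪 ^ q ⊔ J → X ≤ 𝔪 →
      J ⊔ 𝔪 ^ (q + (k + 1)) = J ⊔ X ^ (k + 1) * 𝔪 ^ q := by
    intro J hJ hXm
    refine le_antisymm (sup_le le_sup_left ?_) (sup_le_sup_left ?_ _)
    · exact (pow_add_le_of_pow_succ_le hJ (k + 1)).trans (sup_comm _ _).le
    · rw [add_comm q, pow_add 𝔪]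
      exact mul_mono_left (pow_right_mono hXm _)
  have hXm : X ≤ 𝔪 := by
    rw [hX, span_le]
    rintro _ ⟨i, rfl⟩
    exact hx i
  rw [expand I hxI hXm, expand I' hxI' hXm,
    length_quotient_sup_mul I _ _ (hreg.span_range_pow_inf_le (k + 1)),
    length_quotient_sup_mul I' _ _ (hreg'.span_range_pow_inf_le (k + 1)),
    hreg.colength_span_range_sup_pow, hreg'.colength_span_range_sup_pow, ← hX, ← hI, ← hI', hIX,
    sup_comm _ I, sup_comm _ I', hsmall q (by omega)]

end Local

section LocalCohomologyVanishing

open CategoryTheory Limits Opposite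

variable {R : Type} [CommRing R]

/-- The functor `Hom(-, M)`, as a covariant functor to the opposite category of modules. -/
noncomputable abbrev homTo (M : ModuleCat.{0} R) : ModuleCat.{0} R ⥤ (ModuleCat.{0} R)ᵒᵖ :=
  ((linearYoneda R (ModuleCat.{0} R)).obj M).rightOp

namespace homTo

variable {M : ModuleCat.{0} R}

/-- A morphism `X ⟶ M`, seen as an element of `Hom(X, M)`. -/
noncomputable def elt {X : ModuleCat.{0} R} (φ : X ⟶ M) : (homTo M).obj X ⟶ op (ModuleCat.of R R) :=
  Quiver.Hom.op (X := ModuleCat.of R R) (Y := ModuleCat.of R (X ⟶ M))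
    (ModuleCat.ofHom (LinearMap.toSpanSingleton R (X ⟶ M) φ))

lemma map_elt {X X' : ModuleCat.{0} R} (f : X' ⟶ X) (φ : X ⟶ M) :
    (homTo M).map f ≫ elt φ = elt (f ≫ φ) := by
  apply Quiver.Hom.unop_inj
  refine ModuleCat.hom_ext (LinearMap.ext_ring ?_)
  change f ≫ ((1 : R) • φ) = (1 : R) • (f ≫ φ)
  rw [one_smul, one_smul]

lemma elt_zero (X : ModuleCat.{0} R) : elt (0 : X ⟶ M) = 0 := by
  apply Quiver.Hom.unop_inj
  refine ModuleCat.hom_ext (LinearMap.ext_ring ?_)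
  change (1 : R) • (0 : X ⟶ M) = 0
  rw [smul_zero]

lemma map_elt_eq_zero {X X' : ModuleCat.{0} R} {f : X' ⟶ X} {φ : X ⟶ M} (h : f ≫ φ = 0) :
    (homTo M).map f ≫ elt φ = 0 := by
  rw [map_elt, h]
  exact elt_zero _

lemma elt_injective (X : ModuleCat.{0} R) : Function.Injective (elt (M := M) (X := X)) := by
  intro φ ψ h
  have h1 : (1 : R) • φ = (1 : R) • ψ :=
    congrArg (fun g : (homTo M).obj X ⟶ op (ModuleCat.of R R) => g.unop.hom (1 : R)) h
  rwa [one_smul, one_smul] at h1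

lemma elt_surjective (X : ModuleCat.{0} R) : Function.Surjective (elt (M := M) (X := X)) := by
  intro g
  refine ⟨g.unop.hom (1 : R), ?_⟩
  apply Quiver.Hom.unop_inj
  refine ModuleCat.hom_ext (LinearMap.ext_ring ?_)
  exact one_smul R (g.unop.hom (1 : R))

instance : Injective (op (ModuleCat.of R R)) := by
  have : Projective (ModuleCat.of R R) := inferInstance
  infer_instance

/-- The class of a cocycle. -/
noncomputable def cls {X : ModuleCat.{0} R} (P : ProjectiveResolution X) {i : ℕ}
    (φ : P.complex.X i ⟶ M) (h : P.complex.d (i + 1) i ≫ φ = 0) :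
    ((homTo M).leftDerived i).obj X ⟶ op (ModuleCat.of R R) :=
  (P.isoLeftDerivedObj (homTo M) i).hom ≫
    (((homTo M).mapHomologicalComplex _).obj P.complex).homologyι i ≫
      (((homTo M).mapHomologicalComplex _).obj P.complex).descOpcycles (elt φ) (i + 1)
        (ChainComplex.prev _ _) (map_elt_eq_zero h)

lemma map_cls {X Y : ModuleCat.{0} R} {P : ProjectiveResolution X} {Q : ProjectiveResolution Y}
    {g : X ⟶ Y} (l : ProjectiveResolution.Hom P Q g) {i : ℕ} (φ : Q.complex.X i ⟶ M)
    (h : Q.complex.d (i + 1) i ≫ φ = 0) :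
    ((homTo M).leftDerived i).map g ≫ cls Q φ h =
      cls P (l.hom.f i ≫ φ) (by rw [← l.hom.comm_assoc, h, comp_zero]) := by
  unfold cls
  rw [ProjectiveResolution.isoLeftDerivedObj_hom_naturality_assoc g P Q l.hom
    l.hom_f_zero_comp_π_f_zero]
  congr 1
  refine (HomologicalComplex.homologyι_naturality_assoc _ _ _).trans ?_
  congr 1
  refine (HomologicalComplex.opcyclesMap_comp_descOpcycles _ _ _ _ _).trans ?_
  congr 1

lemma extMk_eq_zero_of_cls_eq_zero {X : ModuleCat.{0} R} (P : ProjectiveResolution X) {i : ℕ}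
    (φ : P.complex.X i ⟶ M) (h : P.complex.d (i + 1) i ≫ φ = 0) (h0 : cls P φ h = 0) :
    P.extMk φ (i + 1) rfl h = 0 := by
  let K := ((homTo M).mapHomologicalComplex _).obj P.complex
  let k := K.descOpcycles (elt φ) (i + 1) (ChainComplex.prev _ _)
    (map_elt_eq_zero h)
  have h1 : K.homologyι i ≫ k = 0 := by
    exact (cancel_epi (P.isoLeftDerivedObj (homTo M) i).hom).1 (h0.trans comp_zero.symm)
  let S := ShortComplex.mk (K.homologyι i) (K.fromOpcycles i ((ComplexShape.down ℕ).next i))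
    (K.homologyι_comp_fromOpcycles _ _)
  have hS : S.Exact := S.exact_of_f_is_kernel (K.homologyIsKernel i _ rfl)
  have h2 := hS.comp_descToInjective k h1
  have h3 : K.d i ((ComplexShape.down ℕ).next i) ≫ hS.descToInjective k h1 = elt φ := by
    rw [← K.p_fromOpcycles, Category.assoc]
    refine (congrArg _ h2).trans ?_
    exact K.p_descOpcycles _ _ _ _
  rcases Nat.eq_zero_or_pos i with rfl | hi
  · have h4 : elt φ = 0 := by
      rw [← h3, K.shape _ _ (by simp)]
      exact zero_comp
    obtain rfl := elt_injective _ (h4.trans (elt_zero _).symm)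
    exact P.extMk_zero _ _
  · obtain ⟨p, rfl⟩ := Nat.exists_eq_add_of_le' hi
    rw [P.extMk_eq_zero_iff φ _ rfl h p rfl]
    have hn : (ComplexShape.down ℕ).next (p + 1) = p := ChainComplex.next_nat_succ p
    generalize hS.descToInjective k h1 = w at h3
    revert w
    change ∀ w : K.X ((ComplexShape.down ℕ).next (p + 1)) ⟶ _, _
    rw [hn]
    intro w h3
    obtain ⟨ψ, rfl⟩ := elt_surjective _ w
    exact ⟨ψ, elt_injective _ ((map_elt _ _).symm.trans h3)⟩

end homTo

open Abelian

/-- The directed system `Ext^i(R ⧸ J ^ t, M)` has vanishing colimit, i.e. every element of one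
of its terms eventually dies. -/
def PowersExtVanishing (J : Ideal R) (i : ℕ) (M : ModuleCat.{0} R) : Prop :=
  ∀ (t : ℕᵒᵖ) (α : Ext ((localCohomology.ringModIdeals
    (localCohomology.idealPowersDiagram J)).obj t) M i), ∃ (t' : ℕᵒᵖ) (w : t' ⟶ t),
    (Ext.mk₀ ((localCohomology.ringModIdeals (localCohomology.idealPowersDiagram J)).map w)).comp α
      (zero_add i) = 0

lemma PowersExtVanishing.of_localCohomology (J : Ideal R) (i : ℕ) (M : ModuleCat.{0} R)
    (h : Subsingleton ((localCohomology J i).obj M)) : PowersExtVanishing J i M := by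
  intro t α
  let G := localCohomology.ringModIdeals (localCohomology.idealPowersDiagram J)
  let P : ∀ t, ProjectiveResolution (G.obj t) := fun t => projectiveResolution _
  obtain ⟨φ, hφ, rfl⟩ := (P t).extMk_surjective α (i + 1) rfl
  let D := localCohomology.diagram (localCohomology.idealPowersDiagram J) i
  let c := colimit.cocone D
  have hc : IsColimit (((evaluation _ _).obj M).mapCocone c) :=
    isColimitOfPreserves _ (colimit.isColimit D)
  have hsub : Subsingleton ((((evaluation _ _).obj M).mapCocone c).pt) := h
  let x : (D.obj (op t)).obj M := (homTo.cls (P t) φ hφ).unop.hom (1 : R)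
  obtain ⟨k, f, g, hfg⟩ := Concrete.isColimit_exists_of_rep_eq (D ⋙ (evaluation _ _).obj M) hc
    (i := op t) (j := op t) x (0 : (D.obj (op t)).obj M) (hsub.elim _ _)
  refine ⟨k.unop, f.unop, ?_⟩
  let l : ProjectiveResolution.Hom (P k.unop) (P t) (G.map f.unop) :=
    ⟨ProjectiveResolution.lift (G.map f.unop) _ _, by
      rw [ProjectiveResolution.lift_commutes_zero, ChainComplex.single₀_map_f_zero]
      rfl⟩
  rw [ProjectiveResolution.mk₀_comp_extMk (φ := l)]
  apply homTo.extMk_eq_zero_of_cls_eq_zero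
  rw [← homTo.map_cls]
  apply Quiver.Hom.unop_inj
  refine ModuleCat.hom_ext (LinearMap.ext_ring ?_)
  exact hfg.trans (map_zero _)

lemma PowersExtVanishing.of_shortExact {J : Ideal R} {i : ℕ} {S : ShortComplex (ModuleCat.{0} R)}
    (hS : S.ShortExact) (h : PowersExtVanishing J i S.X₂) (h' : PowersExtVanishing J (i + 1) S.X₁) :
    PowersExtVanishing J i S.X₃ := by
  intro t α
  obtain ⟨t₁, w₁, h₁⟩ := h' t (α.comp hS.extClass rfl)
  rw [← Ext.comp_assoc _ _ _ (zero_add i) rfl (by lia)] at h₁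
  obtain ⟨β, hβ⟩ := Ext.covariant_sequence_exact₃ _ hS _ rfl h₁
  obtain ⟨t₂, w₂, h₂⟩ := h t₁ β
  refine ⟨t₂, w₂ ≫ w₁, ?_⟩
  rw [Functor.map_comp, ← Ext.mk₀_comp_mk₀, Ext.comp_assoc_of_second_deg_zero, ← hβ,
    ← Ext.comp_assoc_of_third_deg_zero, h₂, Ext.zero_comp]

/-- If multiplication by `z` is injective on `M`, vanishing in degrees `i` and `i + 1` for `M` gives
vanishing in degree `i` for `M ⧸ z M`. -/
lemma PowersExtVanishing.quotSMulTop {J : Ideal R} {i : ℕ} {M : Type} [AddCommGroup M] [Module R M]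
    (h : PowersExtVanishing J i (ModuleCat.of R M))
    (h' : PowersExtVanishing J (i + 1) (ModuleCat.of R M)) {z : R}
    (hz : IsSMulRegular M z) : PowersExtVanishing J i (ModuleCat.of R (QuotSMulTop z M)) :=
  have hz' : IsSMulRegular (ModuleCat.of R M) z := hz
  PowersExtVanishing.of_shortExact hz'.smulShortComplex_shortExact h h'

lemma PowersExtVanishing.subsingleton_linearMap {J : Ideal R} {M : Type} [AddCommGroup M]
    [Module R M] (h : PowersExtVanishing J 0 (ModuleCat.of R M)) :
    Subsingleton ((R ⧸ J) →ₗ[R] M) := by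
  refine subsingleton_of_forall_eq 0 fun φ => ?_
  let G := localCohomology.ringModIdeals (localCohomology.idealPowersDiagram J)
  let p : (R ⧸ J ^ 1) →ₗ[R] (R ⧸ J) := Submodule.factor (pow_one J).le
  have hp : Function.Surjective p := Submodule.factor_surjective _
  let ψ : G.obj (op 1) ⟶ ModuleCat.of R M := ModuleCat.ofHom (φ ∘ₗ p)
  obtain ⟨t, w, hw⟩ := h (op 1) (Ext.mk₀ ψ)
  rw [Ext.mk₀_comp_mk₀, Ext.mk₀_eq_zero_iff] at hw
  ext
  obtain ⟨y, hy⟩ := hp 1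
  obtain ⟨y, rfl⟩ := Ideal.Quotient.mk_surjective y
  have h1 := congrArg (fun g => g.hom (Ideal.Quotient.mk _ y)) hw
  change φ (p (Ideal.Quotient.mk _ y)) = 0 at h1
  rw [hy] at h1
  exact h1

open RingTheory.Sequence in
/-- Vanishing of the first `n` local cohomology modules bounds the depth from below. -/
theorem PowersExtVanishing.exists_isWeaklyRegular [IsLocalRing R] [IsNoetherianRing R] {n : ℕ}
    {M : Type} [AddCommGroup M] [Module R M] [Module.Finite R M]
    (h : ∀ i < n, PowersExtVanishing (maximalIdeal R) i (ModuleCat.of R M)) :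
    ∃ rs : List R, rs.length = n ∧ (∀ x ∈ rs, x ∈ maximalIdeal R) ∧ IsWeaklyRegular M rs := by
  induction n generalizing M with
  | zero => exact ⟨[], rfl, by simp, IsWeaklyRegular.nil R M⟩
  | succ n ih =>
    have h0 : ∃ z ∈ maximalIdeal R, IsSMulRegular M z := by
      simpa [Ideal.annihilator_quotient] using
        IsSMulRegular.subsingleton_linearMap_iff.1 (h 0 n.succ_pos).subsingleton_linearMap
    obtain ⟨z, hz, hreg⟩ := h0
    obtain ⟨rs, hl, hm, hrs⟩ := ih (M := QuotSMulTop z M) fun i hi =>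
      (h i (by lia)).quotSMulTop (h (i + 1) (by lia)) hreg
    exact ⟨z :: rs, by simp [hl], List.forall_mem_cons.2 ⟨hz, hm⟩,
      (isWeaklyRegular_cons_iff M z rs).2 ⟨hreg, hrs⟩⟩

end LocalCohomologyVanishing

section BaseChange

open Polynomial TensorProduct

universe u

lemma Ideal.colength_map_of_flat {A B : Type u} [CommRing A] [CommRing B] [IsLocalRing A]
    [IsLocalRing B] [Algebra A B] [IsLocalHom (algebraMap A B)] [Module.Flat A B]
    (h : (maximalIdeal A).map (algebraMap A B) = maximalIdeal B) (J : Ideal A) :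
    (J.map (algebraMap A B)).colength = J.colength := by
  have h1 := IsLocalRing.length_baseChange A B (A ⧸ J)
  rw [h, show Module.length B (B ⧸ maximalIdeal B) = 1 from colength_maximalIdeal,
    mul_one] at h1
  exact (Algebra.TensorProduct.quotIdealMapEquivTensorQuot B J).toLinearEquiv.length_eq.trans h1

variable (R : Type u) [CommRing R] [IsLocalRing R]

instance : ((maximalIdeal R).map (C : R →+* R[X])).IsPrime :=
  Ideal.isPrime_map_C_of_isPrime

/-- The local ring `R(X)`, the localization of `R[X]` at the extension of the maximal ideal. -/
abbrev NagataRing : Type u := Localization.AtPrime ((maximalIdeal R).map (C : R →+* R[X]))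

namespace NagataRing

instance : Module.Flat R (NagataRing R) :=
  have : Module.Flat R[X] (NagataRing R) := IsLocalization.flat _
    ((maximalIdeal R).map (C : R →+* R[X])).primeCompl
  Module.Flat.trans R R[X] (NagataRing R)

lemma map_maximalIdeal :
    (maximalIdeal R).map (algebraMap R (NagataRing R)) = maximalIdeal (NagataRing R) := by
  rw [← Localization.AtPrime.map_eq_maximalIdeal, Ideal.map_map]
  rfl

instance : IsLocalHom (algebraMap R (NagataRing R)) :=
  ((local_hom_TFAE (algebraMap R (NagataRing R))).out 0 2).2 (map_maximalIdeal R).le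

instance [IsNoetherianRing R] : IsNoetherianRing (NagataRing R) :=
  IsLocalization.isNoetherianRing ((maximalIdeal R).map (C : R →+* R[X])).primeCompl _ inferInstance

instance : Infinite (ResidueField (NagataRing R)) := by
  refine Infinite.of_injective
    (fun n : ℕ => residue (NagataRing R) (algebraMap R[X] (NagataRing R) (X ^ n))) ?_
  intro i j h
  by_contra hij
  have h1 : algebraMap R[X] (NagataRing R) (X ^ i - X ^ j) ∈ maximalIdeal (NagataRing R) := by
    rw [← residue_eq_zero_iff, map_sub, map_sub, sub_eq_zero]
    exact h
  rw [IsLocalization.AtPrime.to_map_mem_maximal_iff (NagataRing R)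
    ((maximalIdeal R).map (C : R →+* R[X])), Ideal.mem_map_C_iff] at h1
  have h2 := h1 i
  rw [coeff_sub, coeff_X_pow_self, coeff_X_pow, if_neg hij, sub_zero] at h2
  exact (Ideal.ne_top_iff_one _).1 (maximalIdeal.isMaximal R).ne_top h2

end NagataRing

end BaseChange

section Main

open Ideal

lemma Ideal.map_span_range {A B ι : Type*} [CommRing A] [CommRing B] (φ : A →+* B) (f : ι → A) :
    (span (Set.range f)).map φ = span (Set.range fun i => φ (f i)) := by
  rw [map_span, ← Set.range_comp]
  rfl

universe u

theorem colength_sup_pow_eq {R : Type u} [CommRing R] [IsLocalRing R] [IsNoetherianRing R]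
    {r s : ℕ} (rs : List R) (hlen : rs.length = r + s) (hrs : ∀ x ∈ rs, x ∈ maximalIdeal R)
    (hreg : RingTheory.Sequence.IsWeaklyRegular R rs) (f : Fin r → R)
    (hf : ∀ i, f i ∈ maximalIdeal R) (Len : ℕ → ℕ)
    (hLen : ∀ n, colength (span (Set.range f) ⊔ maximalIdeal R ^ n) = Len n) (E : ℕ)
    (hE : Tendsto (fun n : ℕ => (Len n : ℝ) * (Nat.factorial s) / (n : ℝ) ^ s) atTop (nhds (E : ℝ)))
    (ε : Fin r → R) (hε : ∀ i, ε i ∈ maximalIdeal R ^ (Nat.factorial s * E + 1)) (n : ℕ) :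
    colength (span (Set.range f) ⊔ maximalIdeal R ^ n) =
      colength (span (Set.range fun j => f j + ε j) ⊔ maximalIdeal R ^ n) := by
  let φ := algebraMap R (NagataRing R)
  have hm : (maximalIdeal R).map φ = maximalIdeal (NagataRing R) := NagataRing.map_maximalIdeal R
  have hext : ExtVanishing (NagataRing R) (r + s) (NagataRing R) := by
    have h := ExtVanishing.of_isRegular (rs.map φ) ?_
      (hreg.of_flat (S := NagataRing R))
    · rwa [List.length_map, hlen] at h
    · intro y hy
      obtain ⟨x, hx, rfl⟩ := List.mem_map.1 hy
      exact hm ▸ mem_map_of_mem φ (hrs x hx)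
  have key : ∀ (g : Fin r → R) (k : ℕ), colength (span (Set.range g) ⊔ maximalIdeal R ^ k) =
      colength (span (Set.range fun i => φ (g i)) ⊔ maximalIdeal (NagataRing R) ^ k) := by
    intro g k
    rw [← colength_map_of_flat (NagataRing.map_maximalIdeal R), Ideal.map_sup, Ideal.map_pow,
      NagataRing.map_maximalIdeal R, map_span_range]
  rw [key, key]
  simp only [map_add]
  refine colength_sup_pow_eq_of_infinite hext _ (fun i => hm ▸ mem_map_of_mem φ (hf i)) Len
    (fun k => (key f k).symm.trans (hLen k)) E hE _ (fun i => ?_) n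
  rw [← hm, ← Ideal.map_pow]
  exact mem_map_of_mem φ (hε i)

end Main

theorem statement12 (R : Type) [CommRing R] [IsNoetherianRing R] [IsLocalRing R]
    (d r : ℕ) (hrd : r ≤ d) (hdim : ringKrullDim R = d)
    (hCM : ∀ i < d, Subsingleton ((localCohomology (maximalIdeal R) i).obj (ModuleCat.of R R)))
    (f : Fin r → R) (I : Ideal R) (hI : I = Ideal.span (Set.range f))
    (hsop : ringKrullDim (R ⧸ I) = ((d - r : ℕ) : WithBot ℕ∞))
    (Len : ℕ → ℕ) (hLen : ∀ n, modLen R (R ⧸ (I ⊔ maximalIdeal R ^ n)) = (Len n : ℕ∞))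
    (E : ℕ)
    (hE : Tendsto (fun n : ℕ => (Len n : ℝ) * (Nat.factorial (d - r)) / (n : ℝ) ^ (d - r))
      atTop (nhds (E : ℝ)))
    (N : ℕ) (hN : N = Nat.factorial (d - r) * E + 1)
    (ε : Fin r → R) (hε : ∀ i, ε i ∈ maximalIdeal R ^ N) :
    ∀ n : ℕ, 1 ≤ n →
      modLen R (R ⧸ (I ⊔ maximalIdeal R ^ n)) =
      modLen R (R ⧸ (Ideal.span (Set.range fun j => f j + ε j) ⊔ maximalIdeal R ^ n)) := by
  intro n _
  subst hI hN
  have hf : ∀ i, f i ∈ maximalIdeal R := by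
    have hne : Ideal.span (Set.range f) ≠ ⊤ := by
      intro h
      have : Subsingleton (R ⧸ Ideal.span (Set.range f)) := Ideal.Quotient.subsingleton_iff.2 h
      rw [ringKrullDim_eq_bot_of_subsingleton] at hsop
      exact WithBot.bot_ne_coe hsop
    exact fun i => le_maximalIdeal hne (Ideal.subset_span ⟨i, rfl⟩)
  obtain ⟨rs, hlen, hrs, hreg⟩ := PowersExtVanishing.exists_isWeaklyRegular (R := R) (M := R)
    (n := d) fun i hi => .of_localCohomology _ _ _ (hCM i hi)
  have h := colength_sup_pow_eq rs (hlen.trans (Nat.add_sub_cancel' hrd).symm) hrs hreg f hf Len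
    (fun k => WithBot.coe_injective ((Module.coe_length R _).trans (hLen k))) E hE ε hε n
  simp only [modLen, ← Module.coe_length]
  exact congrArg _ h
end
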